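/- arXiv:1607.07951 — 16 statements merged into one kernel-verified Lean document; each statement's English description precedes it below -/
import Mathlib

section
/- Let c and r be nonzero integers and let A = {c·r^n : n ≥ 0} be a geometric progression of integers. Then for every prime p, the quotient set R(A) = {x/y : x, y ∈ A} is not dense in the field ℚ_p of p-adic numbers (under the canonical embedding of ℚ into ℚ_p). -/
/-!
The quotient set consists of integral powers of `r`, so the norm of an element is an integral power
of `‖r‖`. If `‖r‖ = 1` (that is, `p ∤ r`), every element has norm `1` and none is close to `0`.
If `‖r‖ < 1`, the only element of norm `1` is `1` itself, and so the unit `1 + p` cannot be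
approximated to within less than `‖p‖`.
-/

/-- The quotient set of a geometric progression of integers is not dense
in any `ℚ_[p]`. -/
theorem geometric_progression_quotient_set_not_dense
    (c r : ℤ) (hc : c ≠ 0) (hr : r ≠ 0) (p : ℕ) [Fact p.Prime] :
    ¬ Dense ((fun q : ℚ => (q : ℚ_[p])) ''
      {q : ℚ | ∃ m n : ℕ, q = ((c * r ^ m : ℤ) : ℚ) / ((c * r ^ n : ℤ) : ℚ)}) := by
  intro hd
  have hc' : (c : ℚ_[p]) ≠ 0 := by exact_mod_cast hc
  have hr' : (r : ℚ_[p]) ≠ 0 := by exact_mod_cast hr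
  have key : ∀ (a : ℚ_[p]) (ε : ℝ), 0 < ε →
      ∃ m n : ℕ, ‖a - (r : ℚ_[p]) ^ m / (r : ℚ_[p]) ^ n‖ < ε := by
    intro a ε hε
    obtain ⟨_, ⟨q, ⟨m, n, rfl⟩, rfl⟩, h⟩ := hd.exists_dist_lt a hε
    refine ⟨m, n, ?_⟩
    rw [dist_eq_norm] at h
    push_cast at h
    rwa [mul_div_mul_left _ _ hc'] at h
  by_cases h1 : ‖(r : ℚ_[p])‖ = 1
  · obtain ⟨m, n, h⟩ := key 0 1 one_pos
    simp [h1] at h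
  · have hp0 : 0 < ‖(p : ℚ_[p])‖ :=
      norm_pos_iff.2 (by exact_mod_cast (Fact.out : p.Prime).ne_zero)
    obtain ⟨m, n, h⟩ := key (1 + p) ‖(p : ℚ_[p])‖ hp0
    set x : ℚ_[p] := (r : ℚ_[p]) ^ m / (r : ℚ_[p]) ^ n with hx
    have hx1 : ‖x - 1‖ < ‖(1 : ℚ_[p])‖ := by
      have h2 := Padic.nonarchimedean (p : ℚ_[p]) (-(1 + p - x))
      rw [norm_neg, max_eq_left h.le,
        show (p : ℚ_[p]) + -(1 + p - x) = x - 1 by ring] at h2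
      rw [norm_one]
      exact h2.trans_lt Padic.norm_p_lt_one
    have hx2 : ‖x‖ = 1 := by
      by_contra hne
      have h3 := Padic.add_eq_max_of_ne (p := p) (q := x) (r := -1) (by simpa using hne)
      rw [← sub_eq_add_neg, norm_neg] at h3
      exact absurd hx1 (not_lt.2 (h3 ▸ le_max_right _ _))
    have hmn : m = n := by
      rw [hx, norm_div, norm_pow, norm_pow, div_eq_one_iff_eq (by simpa using fun h => absurd h hr)] at hx2
      exact (pow_right_injective₀ (norm_pos_iff.2 hr') h1) hx2
    rw [hx, hmn, div_self (pow_ne_zero _ hr'), add_sub_cancel_left] at h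
    exact lt_irrefl _ h
end

section
/- Let p be a prime and let A ⊆ ℕ be p-adically dense in ℕ, i.e., for every n ∈ ℕ and every r ≥ 1 there exists a ∈ A with ν_p(a − n) ≥ r. Then the quotient set R(A) = {a/a' : a, a' ∈ A} is dense in the field ℚ_p of p-adic numbers. -/
/-!
Every integer `z` is congruent mod `p ^ r` to a positive one, so density of `A` in the positive
integers puts `z` in the closure of `A` in `ℚ_[p]` (`intCast_mem_closure_of_padically_dense`).
Division is continuous away from a zero denominator, so the closure of `R(A)` contains every
rational `m / n`; since `ℚ` is dense in `ℚ_[p]`, that closure is everything.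
-/

/-- Hypothesis `hdense` concerns positive integers only; a shift by a multiple of `p ^ r` extends
it to all integers, including zero and the negative ones. -/
theorem intCast_mem_closure_of_padically_dense (p : ℕ) [Fact p.Prime] (A : Set ℕ)
    (hdense : ∀ n : ℕ, 0 < n → ∀ r : ℕ, 1 ≤ r → ∃ a ∈ A, (p : ℤ) ^ r ∣ (a : ℤ) - (n : ℤ))
    (z : ℤ) : (z : ℚ_[p]) ∈ closure ((fun a : ℕ => (a : ℚ_[p])) '' A) := by
  rw [Metric.mem_closure_iff]
  intro ε hε
  obtain ⟨k, hk⟩ := PadicInt.exists_pow_neg_lt p hε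
  have hp : 1 < p := (Fact.out : p.Prime).one_lt
  have hpow : (1 : ℤ) ≤ (p : ℤ) ^ (k + 1) := one_le_pow₀ (by exact_mod_cast hp.le)
  -- The shift `|z| + 1` is large enough to make the representative positive.
  have hpos : 0 < z + (p : ℤ) ^ (k + 1) * (|z| + 1) := by
    nlinarith [neg_abs_le z, abs_nonneg z]
  obtain ⟨a, ha, hdvd⟩ := hdense (z + (p : ℤ) ^ (k + 1) * (|z| + 1)).toNat (by omega) (k + 1)
    (by omega)
  rw [Int.toNat_of_nonneg hpos.le] at hdvd
  have hdvd' : ((p ^ k : ℕ) : ℤ) ∣ (a : ℤ) - z := by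
    have h2 : (p : ℤ) ^ (k + 1) ∣ (a : ℤ) - z := by
      obtain ⟨c, hc⟩ := hdvd
      exact ⟨c + (|z| + 1), by linear_combination hc⟩
    push_cast
    exact (pow_dvd_pow _ (Nat.le_succ k)).trans h2
  refine ⟨a, ⟨a, ha, rfl⟩, ?_⟩
  rw [dist_comm, dist_eq_norm]
  have h := (Padic.norm_int_le_pow_iff_dvd (p := p) ((a : ℤ) - z) k).2 (by exact_mod_cast hdvd')
  push_cast at h
  exact h.trans_lt hk

/-- If `A ⊆ ℕ = {1,2,…}` is `p`-adically dense in `ℕ` (for every positive `n`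
and every `r ≥ 1` there is `a ∈ A` with `ν_p(a - n) ≥ r`, i.e. `p^r ∣ a - n`),
then the quotient set `R(A)` is dense in `ℚ_[p]`. -/
theorem quotient_set_dense_of_padically_dense
    (p : ℕ) [Fact p.Prime] (A : Set ℕ) (hA : ∀ a ∈ A, 0 < a)
    (hdense : ∀ n : ℕ, 0 < n → ∀ r : ℕ, 1 ≤ r → ∃ a ∈ A, (p : ℤ) ^ r ∣ (a : ℤ) - (n : ℤ)) :
    Dense ((fun q : ℚ => (q : ℚ_[p])) ''
      {q : ℚ | ∃ a ∈ A, ∃ b ∈ A, q = (a : ℚ) / (b : ℚ)}) := by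
  refine (Padic.denseRange_ratCast p).mono ?_ |>.of_closure
  rintro _ ⟨q, rfl⟩
  obtain ⟨u, hu, hulim⟩ := mem_closure_iff_seq_limit.1
    (intCast_mem_closure_of_padically_dense p A hdense q.num)
  obtain ⟨v, hv, hvlim⟩ := mem_closure_iff_seq_limit.1
    (intCast_mem_closure_of_padically_dense p A hdense q.den)
  have hden : ((q.den : ℤ) : ℚ_[p]) ≠ 0 := by exact_mod_cast q.den_nz
  have hlim := hulim.div hvlim hden
  have hq : (q : ℚ_[p]) = (q.num : ℚ_[p]) / ((q.den : ℤ) : ℚ_[p]) := by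
    rw [Int.cast_natCast, Rat.cast_def]
  rw [hq]
  refine mem_closure_of_tendsto hlim (Filter.Eventually.of_forall fun n => ?_)
  obtain ⟨a, ha, hau⟩ := hu n
  obtain ⟨b, hb, hbv⟩ := hv n
  refine ⟨(a : ℚ) / b, ⟨a, ha, b, hb, rfl⟩, ?_⟩
  simp only at hau hbv
  simp [← hau, ← hbv]
end

section
/- Let p be a prime and let A ⊆ ℕ. If the quotient set R(A) = {a/a' : a, a' ∈ A} is p-adically dense in ℕ, i.e., for every n ∈ ℕ and every r ≥ 1 there exists x ∈ R(A) with ν_p(x − n) ≥ r, then R(A) is dense in the field ℚ_p of p-adic numbers. -/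
/-!
Let `C` be the closure of `R(A)` in `ℚ_[p]`. Every `p`-adic integer is a limit of positive
integers, each of which lies in `C` by hypothesis, so `ℤ_[p] ⊆ C`. Since `R(A)` is stable under
`x ↦ x⁻¹`, which is continuous away from `0`, so is `C \ {0}`. An element of `ℚ_[p]` outside
`ℤ_[p]` is the inverse of a nonzero `p`-adic integer, hence `C = ℚ_[p]`.
-/

/-- If the quotient set `R(A)` of `A ⊆ ℕ = {1,2,…}` is `p`-adically dense in `ℕ`
(for every positive `n` and every `r ≥ 1` there is `x ∈ R(A)` with
`ν_p(x - n) ≥ r`, i.e. `‖x - n‖_p ≤ p^(-r)`), then `R(A)` is dense in `ℚ_[p]`. -/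
theorem quotient_set_dense_of_quotient_set_padically_dense
    (p : ℕ) [Fact p.Prime] (A : Set ℕ) (hA : ∀ a ∈ A, 0 < a)
    (hdense : ∀ n : ℕ, 0 < n → ∀ r : ℕ, 1 ≤ r →
      ∃ x ∈ {q : ℚ | ∃ a ∈ A, ∃ b ∈ A, q = (a : ℚ) / (b : ℚ)},
        ‖(x : ℚ_[p]) - (n : ℚ_[p])‖ ≤ (p : ℝ) ^ (-(r : ℤ))) :
    Dense ((fun q : ℚ => (q : ℚ_[p])) ''
      {q : ℚ | ∃ a ∈ A, ∃ b ∈ A, q = (a : ℚ) / (b : ℚ)}) := by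
  have hp : p.Prime := Fact.out
  set S : Set ℚ_[p] := (fun q : ℚ => (q : ℚ_[p])) ''
      {q : ℚ | ∃ a ∈ A, ∃ b ∈ A, q = (a : ℚ) / (b : ℚ)} with hS
  have hint : ∀ x : ℤ_[p], (x : ℚ_[p]) ∈ closure S := by
    intro x
    rw [Metric.mem_closure_iff]
    intro ε hε
    obtain ⟨k, hk⟩ := PadicInt.exists_pow_neg_lt p hε
    have hk' : (p : ℝ) ^ (-((k + 1 : ℕ) : ℤ)) < ε := by
      refine lt_of_le_of_lt ?_ hk
      exact zpow_le_zpow_right₀ (by exact_mod_cast hp.one_lt.le) (by push_cast; omega)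
    -- Adding `p ^ (k + 1)` makes the truncation of `x` positive without losing precision.
    obtain ⟨q, hq, hqn⟩ := hdense (x.appr (k + 1) + p ^ (k + 1))
      (Nat.add_pos_right _ (pow_pos hp.pos _)) (k + 1) (by omega)
    refine ⟨q, ⟨q, hq, rfl⟩, lt_of_le_of_lt ?_ hk'⟩
    have hx : ‖x - ((x.appr (k + 1) + p ^ (k + 1) : ℕ) : ℤ_[p])‖
        ≤ (p : ℝ) ^ (-((k + 1 : ℕ) : ℤ)) := by
      rw [PadicInt.norm_le_pow_iff_mem_span_pow]
      have h := PadicInt.appr_spec (k + 1) x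
      have h2 := Ideal.sub_mem _ h (Ideal.mem_span_singleton_self ((p : ℤ_[p]) ^ (k + 1)))
      convert h2 using 1
      push_cast
      ring
    rw [PadicInt.norm_def] at hx
    push_cast at hx hqn
    rw [dist_eq_norm]
    have h := Padic.nonarchimedean
      ((x : ℚ_[p]) - ((x.appr (k + 1) : ℚ_[p]) + (p : ℚ_[p]) ^ (k + 1)))
      (((x.appr (k + 1) : ℚ_[p]) + (p : ℚ_[p]) ^ (k + 1)) - q)
    rw [sub_add_sub_cancel] at h
    refine h.trans (max_le (by push_cast; exact hx) ?_)
    rw [norm_sub_rev]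
    push_cast
    exact hqn
  intro y
  rcases le_total ‖y‖ 1 with hy | hy
  · exact hint ⟨y, hy⟩
  · have hy0 : y ≠ 0 := norm_pos_iff.mp (one_pos.trans_le hy)
    have hinv : y⁻¹ ∈ closure S :=
      hint ⟨y⁻¹, by rw [norm_inv]; exact inv_le_one_of_one_le₀ hy⟩
    have h := mem_closure_image (continuousAt_inv₀ (inv_ne_zero hy0)) hinv
    rw [inv_inv] at h
    refine closure_mono ?_ h
    rintro _ ⟨_, ⟨_, ⟨a, ha, b, hb, rfl⟩, rfl⟩, rfl⟩
    exact ⟨b / a, ⟨b, hb, a, ha, rfl⟩, by push_cast; rw [inv_div]⟩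
end

section
/- Let a, b be positive integers, let A = {a·n + b : n ≥ 0}, and let p be a prime. (a) If p does not divide a, then the quotient set R(A) is dense in ℚ_p. (b) If p divides a and p does not divide b, then R(A) is not dense in ℚ_p. -/
/-!
If `p ∤ a`, then `a` is a unit of `ℤ_[p]`, so `x ↦ a * x + b` is a continuous surjection of
`ℤ_[p]`; it carries the dense set `ℕ` onto the progression, which is therefore dense in `ℤ_[p]`.
Every element of `ℚ_[p]` is a quotient `u / v` with `u, v ∈ ℤ_[p]` and `v ≠ 0`, and division is
continuous at `(u, v)`, so quotients of progression terms approximate it.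

If `p ∣ a` and `p ∤ b`, then every term of the progression is prime to `p`, so every quotient has
`p`-adic norm `1` and none lies in the open unit ball around `0`.
-/

/-- A progression whose difference is prime to `p` is dense in the `p`-adic integers. -/
lemma denseRange_progression (a b p : ℕ) [Fact p.Prime] (h : ¬ p ∣ a) :
    DenseRange (fun n : ℕ => ((a * n + b : ℕ) : ℤ_[p])) := by
  have hu : IsUnit (a : ℤ_[p]) := by
    rw [PadicInt.isUnit_iff, PadicInt.norm_natCast_eq_one_iff]
    exact (Nat.Prime.coprime_iff_not_dvd Fact.out).2 h
  have hs : Function.Surjective (fun x : ℤ_[p] => a * x + b) := by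
    intro y
    obtain ⟨c, hc⟩ := hu.exists_right_inv
    exact ⟨c * (y - b), by linear_combination (y - b) * hc⟩
  have hd := hs.denseRange.comp PadicInt.denseRange_natCast (by fun_prop)
  convert hd using 2 with n
  simp

/-- A progression congruent mod `p` to a constant prime to `p` consists of `p`-adic units. -/
lemma norm_progression (a b p n : ℕ) [Fact p.Prime] (h : p ∣ a) (hb : ¬ p ∣ b) :
    ‖((a * n + b : ℕ) : ℚ_[p])‖ = 1 := by
  rw [Padic.norm_natCast_eq_one_iff, Nat.Prime.coprime_iff_not_dvd Fact.out]
  rwa [Nat.dvd_add_right (h.mul_right n)]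

/-- For `A = {a·n + b : n ≥ 0}` with `a, b` positive integers and `p` prime:
(a) if `p ∤ a` then `R(A)` is dense in `ℚ_[p]`;
(b) if `p ∣ a` and `p ∤ b` then `R(A)` is not dense in `ℚ_[p]`. -/
theorem arithmetic_progression_quotient_set
    (a b : ℕ) (ha : 0 < a) (hb : 0 < b) (p : ℕ) [Fact p.Prime] :
    (¬ p ∣ a → Dense ((fun q : ℚ => (q : ℚ_[p])) ''
      {q : ℚ | ∃ m n : ℕ, q = ((a * m + b : ℕ) : ℚ) / ((a * n + b : ℕ) : ℚ)})) ∧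
    (p ∣ a → ¬ p ∣ b → ¬ Dense ((fun q : ℚ => (q : ℚ_[p])) ''
      {q : ℚ | ∃ m n : ℕ, q = ((a * m + b : ℕ) : ℚ) / ((a * n + b : ℕ) : ℚ)})) := by
  constructor
  · intro h x
    obtain ⟨u, v, hv, rfl⟩ := IsFractionRing.div_surjective (A := ℤ_[p]) x
    have hv0 : (v : ℚ_[p]) ≠ 0 := by
      simpa using nonZeroDivisors.ne_zero hv
    have hc : ContinuousAt (fun z : ℤ_[p] × ℤ_[p] => (z.1 : ℚ_[p]) / (z.2 : ℚ_[p])) (u, v) :=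
      ContinuousAt.div (by fun_prop) (by fun_prop) hv0
    have hd := denseRange_progression a b p h
    have hx := mem_closure_image hc (hd.prodMap hd (u, v))
    refine closure_mono ?_ hx
    rintro _ ⟨_, ⟨⟨m, n⟩, rfl⟩, rfl⟩
    exact ⟨_, ⟨m, n, rfl⟩, by simp⟩
  · intro h hb' hd
    obtain ⟨_, ⟨_, ⟨m, n, rfl⟩, rfl⟩, hlt⟩ := hd.exists_dist_lt 0 one_pos
    dsimp only at hlt
    rw [dist_zero_left, Rat.cast_div, Rat.cast_natCast, Rat.cast_natCast, norm_div,
      norm_progression a b p m h hb', norm_progression a b p n h hb'] at hlt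
    norm_num at hlt
end

section
/- For every set P of prime numbers there exists a set A ⊆ ℕ such that for every prime p, the quotient set R(A) = {a/a' : a, a' ∈ A} is dense in ℚ_p if and only if p ∈ P. -/
/-!
Take `A` to be the set of positive integers divisible by `q ^ 2` for no prime `q ∉ P`.

If `p ∉ P` is prime, elements of `A` have `p`-adic valuation `0` or `1`, so no quotient has
valuation `2`, and `R(A)` misses a ball around `p ^ 2`.

If `p ∈ P`, then `p ^ n * r ∈ A` for every `n` and every prime `r`, so `R(A)` contains
`p ^ v * r` for all `v : ℤ`. Every nonzero element of `ℚ_[p]` is `p ^ v * u` with `‖u‖ = 1`, and by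
Dirichlet's theorem on primes in arithmetic progressions `u` is a `p`-adic limit of primes.
-/

/-- The positive integers whose square prime divisors all come from `P`: no `q ^ 2` with `q ∉ P`
prime divides them. -/
def squarefreeOutside (P : Set ℕ) : Set ℕ :=
  {n | 0 < n ∧ ∀ q : ℕ, q.Prime → q ∉ P → ¬ q ^ 2 ∣ n}

lemma pow_mul_mem_squarefreeOutside {P : Set ℕ} {p r : ℕ} (hp : p.Prime) (hpP : p ∈ P)
    (hr : r = 1 ∨ r.Prime) (n : ℕ) : p ^ n * r ∈ squarefreeOutside P := by
  have hr0 : 0 < r := by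
    rcases hr with rfl | hr
    exacts [one_pos, hr.pos]
  have hsq : Squarefree r := by
    rcases hr with rfl | hr
    exacts [squarefree_one, hr.prime.squarefree]
  refine ⟨Nat.mul_pos (pow_pos hp.pos n) hr0, fun q hq hqP hdvd => ?_⟩
  have hne : q ≠ p := fun h => hqP (h ▸ hpP)
  have hcop : Nat.Coprime (q ^ 2) (p ^ n) := Nat.Coprime.pow _ _ ((Nat.coprime_primes hq hp).2 hne)
  have h := hcop.dvd_of_dvd_mul_left hdvd
  rw [pow_two] at h
  exact hq.one_lt.ne' (Nat.isUnit_iff.1 (hsq q h))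

/-- Dirichlet's theorem in `p`-adic form: every `p`-adic unit is a limit of prime numbers. -/
lemma exists_prime_norm_sub_lt (p : ℕ) [hp : Fact p.Prime] (u : ℤ_[p]) (hu : ‖u‖ = 1)
    {δ : ℝ} (hδ : 0 < δ) : ∃ r : ℕ, r.Prime ∧ ‖u - r‖ < δ := by
  obtain ⟨k, hk⟩ := PadicInt.exists_pow_neg_lt p (lt_min hδ one_pos)
  have h1 : ‖u - (u.appr k : ℤ_[p])‖ ≤ (p : ℝ) ^ (-k : ℤ) :=
    (PadicInt.norm_le_pow_iff_mem_span_pow _ _).2 (u.appr_spec k)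
  have hcop : (u.appr k).Coprime (p ^ k) := by
    refine Nat.Coprime.pow_right _ (Nat.Coprime.symm ?_)
    rw [hp.out.coprime_iff_not_dvd, ← PadicInt.norm_natCast_lt_one_iff]
    intro hlt
    have h := PadicInt.nonarchimedean (u - (u.appr k : ℤ_[p])) (u.appr k : ℤ_[p])
    rw [sub_add_cancel, hu] at h
    have := max_lt (h1.trans_lt (hk.trans_le (min_le_right _ _))) hlt
    linarith
  obtain ⟨r, -, hr, hmod⟩ :=
    Nat.forall_exists_prime_gt_and_modEq 0 (pow_ne_zero k hp.out.ne_zero) hcop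
  refine ⟨r, hr, ?_⟩
  have h2 : ‖(u.appr k : ℤ_[p]) - (r : ℤ_[p])‖ ≤ (p : ℝ) ^ (-k : ℤ) := by
    have h := PadicInt.norm_int_le_pow_iff_dvd (p := p) (k := (u.appr k : ℤ) - r) (n := k)
    push_cast at h
    rw [h]
    exact_mod_cast hmod.dvd
  have h := PadicInt.nonarchimedean (u - (u.appr k : ℤ_[p])) ((u.appr k : ℤ_[p]) - (r : ℤ_[p]))
  rw [sub_add_sub_cancel] at h
  exact (h.trans (max_le h1 h2)).trans_lt (hk.trans_le (min_le_left _ _))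

theorem exists_set_quotient_dense_iff_mem
    (P : Set ℕ) (hP : ∀ p ∈ P, p.Prime) :
    ∃ A : Set ℕ, (∀ a ∈ A, 0 < a) ∧
      ∀ (p : ℕ) [Fact p.Prime],
        (Dense ((fun q : ℚ => (q : ℚ_[p])) ''
          {q : ℚ | ∃ a ∈ A, ∃ b ∈ A, q = (a : ℚ) / (b : ℚ)}) ↔ p ∈ P) := by
  refine ⟨squarefreeOutside P, fun a ha => ha.1, fun p hp => ⟨fun hd => ?_, fun hpP => ?_⟩⟩
  · by_contra hpP
    have hp1 : (1 : ℝ) < p := mod_cast hp.out.one_lt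
    have hpos : 0 < ‖(p : ℚ_[p]) ^ 2‖ := norm_pos_iff.2 (pow_ne_zero 2 (mod_cast hp.out.ne_zero))
    obtain ⟨_, ⟨_, ⟨a, ha, b, hb, rfl⟩, rfl⟩, hy⟩ := hd.exists_dist_lt ((p : ℚ_[p]) ^ 2) hpos
    rw [dist_eq_norm] at hy
    have hnorm := Padic.norm_eq_of_norm_sub_lt_left hy
    rw [Padic.norm_p_pow] at hnorm
    push_cast at hnorm
    rw [norm_div] at hnorm
    have hb1 : ‖(b : ℚ_[p])‖ ≤ 1 := mod_cast Padic.norm_int_le_one (p := p) (b : ℤ)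
    have hb0 : 0 < ‖(b : ℚ_[p])‖ := norm_pos_iff.2 (mod_cast hb.1.ne')
    refine ha.2 p hp.out hpP ?_
    have h := Padic.norm_int_le_pow_iff_dvd (p := p) (a : ℤ) 2
    have h2 : ((p ^ 2 : ℕ) : ℤ) ∣ (a : ℤ) := by
      push_cast
      rw [← h, Int.cast_natCast, ← (eq_div_iff hb0.ne').1 hnorm]
      exact mul_le_of_le_one_right (by positivity) hb1
    exact_mod_cast h2
  · -- Nonzero elements are dense, so it is enough to approximate those.
    refine (dense_compl_singleton (0 : ℚ_[p])).mono ?_ |>.of_closure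
    intro x hx
    have hx0 : x ≠ 0 := hx
    have hpQ : (p : ℚ_[p]) ≠ 0 := mod_cast hp.out.ne_zero
    rw [Metric.mem_closure_iff]
    intro ε hε
    set v := x.valuation
    have hun : ‖x * (p : ℚ_[p]) ^ (-v)‖ = 1 := by
      rw [norm_mul, Padic.norm_p_zpow, Padic.norm_eq_zpow_neg_valuation hx0, neg_neg,
        ← zpow_add₀ (mod_cast hp.out.ne_zero), neg_add_cancel, zpow_zero]
    have hpv : 0 < ‖(p : ℚ_[p]) ^ v‖ := norm_pos_iff.2 (zpow_ne_zero _ hpQ)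
    obtain ⟨u, hu⟩ : ∃ u : ℤ_[p], (u : ℚ_[p]) = x * (p : ℚ_[p]) ^ (-v) := ⟨⟨_, hun.le⟩, rfl⟩
    obtain ⟨r, hr, hlt⟩ :=
      exists_prime_norm_sub_lt p u (by rw [PadicInt.norm_def, hu, hun]) (div_pos hε hpv)
    -- With natural exponents, `p ^ v * r` is `(p ^ v⁺ * r) / p ^ v⁻`.
    refine ⟨_, ⟨_, ⟨_, pow_mul_mem_squarefreeOutside hp.out hpP (.inr hr) v.toNat,
      _, pow_mul_mem_squarefreeOutside hp.out hpP (.inl rfl) (-v).toNat, rfl⟩, rfl⟩, ?_⟩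
    have hy : (((((p ^ v.toNat * r : ℕ) : ℚ) / ((p ^ (-v).toNat * 1 : ℕ) : ℚ)) : ℚ) : ℚ_[p])
        = (p : ℚ_[p]) ^ v * r := by
      have hv : v = (v.toNat : ℤ) - ((-v).toNat : ℤ) := by omega
      conv_rhs => rw [hv, zpow_sub₀ hpQ, zpow_natCast, zpow_natCast]
      push_cast
      rw [mul_one]
      ring
    rw [PadicInt.norm_def, PadicInt.coe_sub, PadicInt.coe_natCast, hu, lt_div_iff₀ hpv, ← norm_mul,
      sub_mul, mul_assoc, ← zpow_add₀ hpQ, neg_add_cancel, zpow_zero, mul_one,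
      mul_comm (r : ℚ_[p])] at hlt
    simpa only [hy, dist_eq_norm] using hlt
end

section
/- There exists a set A ⊆ ℕ containing no arithmetic progression of length three (i.e., there are no x, y, z ∈ A with x < y < z and x + z = 2y) such that for every prime p, the quotient set R(A) is dense in ℚ_p. -/
/-!
A set whose elements at least double has no three-term progression, since `z = 2y - x < 2y`.
So it is enough to find such a sequence whose image is dense in the `p`-adic integers for every `p`
at once. Take `a n = u n + (n + 2)!`, where `u n ≤ n` takes every natural value infinitely
often: the factorial makes the sequence grow, and is `p`-adically negligible, so every natural
number, hence every `p`-adic integer, is a limit of terms of the sequence. As `ℚ_[p]` is the fraction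
field of `ℤ_[p]` and division is continuous away from zero denominators, quotients are dense.
-/

/-- The lacunary sequence `u n + (n + 2)!`, where `u n = (Nat.unpair n).1`. -/
def lacunarySeq (n : ℕ) : ℕ := (Nat.unpair n).1 + (n + 2).factorial

lemma lacunarySeq_pos (n : ℕ) : 0 < lacunarySeq n :=
  Nat.add_pos_right _ (Nat.factorial_pos _)

lemma two_mul_lacunarySeq_le (n : ℕ) : 2 * lacunarySeq n ≤ lacunarySeq (n + 1) := by
  have h1 : (Nat.unpair n).1 ≤ n := Nat.unpair_left_le n
  have h2 : (n + 1 + 2).factorial = (n + 3) * (n + 2).factorial := Nat.factorial_succ (n + 2)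
  have h3 : 2 ≤ (n + 2).factorial :=
    le_trans (by omega) (Nat.self_le_factorial (n + 2))
  unfold lacunarySeq
  rw [h2]
  nlinarith

lemma lacunarySeq_strictMono : StrictMono lacunarySeq :=
  strictMono_nat_of_lt_succ fun n => by
    have := two_mul_lacunarySeq_le n
    have := lacunarySeq_pos n
    omega

lemma natCast_mem_closure_lacunarySeq (p : ℕ) [Fact p.Prime] (u : ℕ) :
    (u : ℚ_[p]) ∈ closure (Set.range fun n => (lacunarySeq n : ℚ_[p])) := by
  have hp : p.Prime := Fact.out
  rw [Metric.mem_closure_range_iff]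
  intro ε hε
  obtain ⟨k, hk⟩ := exists_pow_lt_of_lt_one hε
    (inv_lt_one_of_one_lt₀ (by exact_mod_cast hp.one_lt : (1 : ℝ) < p))
  -- At this index the first component is `u`, and `p ^ k` divides the factorial.
  refine ⟨Nat.pair u (p ^ k), lt_of_le_of_lt ?_ hk⟩
  have hdvd : p ^ k ∣ (Nat.pair u (p ^ k) + 2).factorial :=
    Nat.dvd_factorial (pow_pos hp.pos k)
      ((Nat.right_le_pair u (p ^ k)).trans (Nat.le_add_right _ _))
  have h := (Padic.norm_int_le_pow_iff_dvd (p := p)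
    ((Nat.pair u (p ^ k) + 2).factorial : ℤ) k).2 (by exact_mod_cast hdvd)
  rw [dist_comm, dist_eq_norm]
  simpa [lacunarySeq, zpow_neg] using h

lemma padicInt_mem_closure_lacunarySeq (p : ℕ) [Fact p.Prime] (y : ℤ_[p]) :
    (y : ℚ_[p]) ∈ closure (Set.range fun n => (lacunarySeq n : ℚ_[p])) := by
  refine (PadicInt.denseRange_natCast (p := p)).induction_on
    (p := fun y : ℤ_[p] => (y : ℚ_[p]) ∈ closure (Set.range fun n => (lacunarySeq n : ℚ_[p])))
    y ?_ ?_
  · exact isClosed_closure.preimage continuous_subtype_val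
  · intro u
    simpa using natCast_mem_closure_lacunarySeq p u

/-- There is a set `A ⊆ ℕ = {1,2,…}` containing no three-term arithmetic
progression whose quotient set is dense in every `ℚ_[p]`. -/
theorem exists_no_three_ap_quotient_dense :
    ∃ A : Set ℕ, (∀ a ∈ A, 0 < a) ∧
      (¬ ∃ x ∈ A, ∃ y ∈ A, ∃ z ∈ A, x < y ∧ y < z ∧ x + z = 2 * y) ∧
      ∀ (p : ℕ) [Fact p.Prime],
        Dense ((fun q : ℚ => (q : ℚ_[p])) ''
          {q : ℚ | ∃ a ∈ A, ∃ b ∈ A, q = (a : ℚ) / (b : ℚ)}) := by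
  refine ⟨Set.range lacunarySeq, ?_, ?_, ?_⟩
  · rintro _ ⟨n, rfl⟩
    exact lacunarySeq_pos n
  · rintro ⟨_, ⟨i, rfl⟩, _, ⟨j, rfl⟩, _, ⟨k, rfl⟩, -, hjk, h⟩
    have h1 : j + 1 ≤ k := lacunarySeq_strictMono.lt_iff_lt.1 hjk
    have h2 := lacunarySeq_strictMono.monotone h1
    have h3 := two_mul_lacunarySeq_le j
    have h4 := lacunarySeq_pos i
    omega
  · intro p _ x
    obtain ⟨y, z, hz, rfl⟩ := IsFractionRing.div_surjective (A := ℤ_[p]) x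
    have hz0 : (z : ℚ_[p]) ≠ 0 := by
      simpa using nonZeroDivisors.ne_zero hz
    obtain ⟨s, hs, hsy⟩ := mem_closure_iff_seq_limit.1 (padicInt_mem_closure_lacunarySeq p y)
    obtain ⟨t, ht, htz⟩ := mem_closure_iff_seq_limit.1 (padicInt_mem_closure_lacunarySeq p z)
    refine mem_closure_of_tendsto (hsy.div htz hz0) (Filter.Eventually.of_forall fun n => ?_)
    obtain ⟨i, hi⟩ := hs n
    obtain ⟨j, hj⟩ := ht n
    refine ⟨(lacunarySeq i : ℚ) / (lacunarySeq j : ℚ), ⟨_, ⟨i, rfl⟩, _, ⟨j, rfl⟩, rfl⟩, ?_⟩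
    simp [← hi, ← hj]
end

section
/- Let A ⊆ ℕ have upper asymptotic density equal to 1, i.e., limsup_{n→∞} |A ∩ [1,n]|/n = 1. Then for every prime p, the quotient set R(A) = {a/a' : a, a' ∈ A} is dense in ℚ_p. -/
/-!
A set `A` of upper density `1` satisfies more than is claimed: every positive rational `u / v` is
exactly a quotient of elements of `A`. Choose `n` such that `A` misses fewer than
`n / (4 (u + v))` elements of `[1, n]`. There are about `n / (u + v)` integers `k` with
`u k, v k ≤ n`, and if each of them had `u k ∉ A` or `v k ∉ A`, then `A` would miss too many
elements of `[1, n]`, because `k ↦ u k` and `k ↦ v k` are injective. So some `k` has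
`u k, v k ∈ A`, and `u / v = (u k) / (v k)`.

Positive rationals are dense in `ℚ_[p]`, since `ℚ` is dense and adding a large power of `p`
makes a rational positive at a small `p`-adic cost.
-/

open Filter

/-- Finite counting step: if `A` misses few elements of `[1, n]`, some `k ≥ 1` satisfies
`u * k ∈ A` and `v * k ∈ A`. -/
lemma exists_mul_mem_of_few_missing (A : Set ℕ) (u v n : ℕ) (hu : 0 < u) (hv : 0 < v)
    (hn : u + v ≤ n)
    (hc : n * (4 * (u + v)) < (A ∩ Set.Icc 1 n).ncard * (4 * (u + v)) + n) :
    ∃ k, 0 < k ∧ u * k ∈ A ∧ v * k ∈ A := by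
  classical
  by_contra! hcon
  set B : Finset ℕ := (Finset.Icc 1 n).filter (· ∉ A) with hB
  have hcard : (A ∩ Set.Icc 1 n).ncard + B.card = n := by
    have h1 : A ∩ Set.Icc 1 n = ((Finset.Icc 1 n).filter (· ∈ A) : Finset ℕ) := by
      ext x; simp; tauto
    rw [h1, Set.ncard_coe_finset, hB, Finset.card_filter_add_card_filter_not]
    simp
  set M := n / (u + v) with hM
  have hMn : (u + v) * M ≤ n := Nat.mul_div_le n (u + v)
  have hM1 : 1 ≤ M := (Nat.one_le_div_iff (by omega)).2 hn
  have hM2 : n < (u + v) * (M + 1) := Nat.lt_mul_div_succ n (by omega)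
  have key : ∀ w : ℕ, 0 < w → w ≤ u + v →
      ((Finset.Icc 1 M).filter (fun k => w * k ∉ A)).card ≤ B.card := by
    intro w hw hwle
    refine Finset.card_le_card_of_injOn (fun k => w * k) ?_ ?_
    · intro k hk
      simp only [Finset.coe_filter, Finset.mem_Icc, Set.mem_ofPred_eq] at hk
      simp only [hB, Finset.coe_filter, Finset.mem_Icc, Set.mem_ofPred_eq]
      exact ⟨⟨Nat.mul_pos hw hk.1.1, (Nat.mul_le_mul hwle hk.1.2).trans hMn⟩, hk.2⟩
    · intro a _ b _ hab
      exact Nat.eq_of_mul_eq_mul_left hw hab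
  have hcover : Finset.Icc 1 M ⊆ (Finset.Icc 1 M).filter (fun k => u * k ∉ A) ∪
      (Finset.Icc 1 M).filter (fun k => v * k ∉ A) := by
    intro k hk
    have := hcon k (Finset.mem_Icc.1 hk).1
    simp only [Finset.mem_union, Finset.mem_filter]
    tauto
  have h3 := (Finset.card_le_card hcover).trans (Finset.card_union_le _ _)
  rw [Nat.card_Icc] at h3
  have h4 : M ≤ 2 * B.card := by
    have := key u hu (by omega)
    have := key v hv (by omega)
    omega
  have h5 : (u + v) * M ≤ (u + v) * (2 * B.card) := Nat.mul_le_mul_left _ h4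
  have h6 : (u + v) * 1 ≤ (u + v) * M := Nat.mul_le_mul_left _ hM1
  nlinarith

lemma exists_mul_mem_of_upper_density_one (A : Set ℕ)
    (hdens : Filter.limsup (fun n : ℕ => ((A ∩ Set.Icc 1 n).ncard : ℝ) / n) Filter.atTop = 1)
    (u v : ℕ) (hu : 0 < u) (hv : 0 < v) :
    ∃ k, 0 < k ∧ u * k ∈ A ∧ v * k ∈ A := by
  have hw : (0 : ℝ) < 4 * ((u : ℝ) + v) := by positivity
  have hcob : IsCoboundedUnder (· ≤ ·) atTop
      (fun n : ℕ => ((A ∩ Set.Icc 1 n).ncard : ℝ) / n) :=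
    isCoboundedUnder_le_of_le atTop (x := 0) (fun n => by positivity)
  have hlt : 1 - 1 / (4 * ((u : ℝ) + v)) <
      limsup (fun n : ℕ => ((A ∩ Set.Icc 1 n).ncard : ℝ) / n) atTop := by
    rw [hdens]; linarith [one_div_pos.2 hw]
  obtain ⟨n, hn1, hn2⟩ :=
    ((frequently_lt_of_lt_limsup hcob hlt).and_eventually (eventually_ge_atTop (u + v))).exists
  refine exists_mul_mem_of_few_missing A u v n hu hv hn2 ?_
  have hn : (0 : ℝ) < n := by exact_mod_cast (by omega : 0 < n)
  rw [lt_div_iff₀ hn] at hn1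
  have h := mul_lt_mul_of_pos_right hn1 hw
  have h' : (1 - 1 / (4 * ((u : ℝ) + v))) * n * (4 * (u + v)) = n * (4 * (u + v)) - n := by
    field_simp
  rw [h'] at h
  have : (n : ℝ) * (4 * (u + v)) < ((A ∩ Set.Icc 1 n).ncard : ℝ) * (4 * (u + v)) + n := by
    linarith
  exact_mod_cast this

lemma exists_pos_rat_near (p : ℕ) [Fact p.Prime] (x : ℚ_[p]) (ε : ℝ) (hε : 0 < ε) :
    ∃ q : ℚ, 0 < q ∧ dist x (q : ℚ_[p]) < ε := by
  obtain ⟨r, hr⟩ := Padic.rat_dense p x (half_pos hε)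
  have hp : 1 < p := (Fact.out : p.Prime).one_lt
  have h1 : ∀ᶠ k : ℕ in atTop, ‖(p : ℚ_[p]) ^ k‖ < ε / 2 := by
    have := (tendsto_pow_atTop_nhds_zero_of_norm_lt_one (Padic.norm_p_lt_one (p := p))).norm
    rw [norm_zero] at this
    exact this.eventually_lt_const (half_pos hε)
  have h2 : ∀ᶠ k : ℕ in atTop, -r < (p : ℚ) ^ k :=
    (tendsto_pow_atTop_atTop_of_one_lt (by exact_mod_cast hp)).eventually_gt_atTop _
  obtain ⟨k, hk1, hk2⟩ := (h1.and h2).exists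
  refine ⟨r + (p : ℚ) ^ k, by linarith, ?_⟩
  have : x - ((r + (p : ℚ) ^ k : ℚ) : ℚ_[p]) = (x - r) - (p : ℚ_[p]) ^ k := by
    push_cast; ring
  rw [dist_eq_norm, this]
  linarith [norm_sub_le (x - (r : ℚ_[p])) ((p : ℚ_[p]) ^ k)]

/-- If `A ⊆ ℕ = {1,2,…}` has upper asymptotic density `1`, then the quotient
set `R(A)` is dense in every `ℚ_[p]`. -/
theorem quotient_set_dense_of_upper_density_one
    (A : Set ℕ) (hA : ∀ a ∈ A, 0 < a)
    (hdens : Filter.limsup (fun n : ℕ => ((A ∩ Set.Icc 1 n).ncard : ℝ) / n) Filter.atTop = 1)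
    (p : ℕ) [Fact p.Prime] :
    Dense ((fun q : ℚ => (q : ℚ_[p])) ''
      {q : ℚ | ∃ a ∈ A, ∃ b ∈ A, q = (a : ℚ) / (b : ℚ)}) := by
  rw [Metric.dense_iff]
  intro x ε hε
  obtain ⟨q, hq, hd⟩ := exists_pos_rat_near p x ε hε
  refine ⟨q, by rwa [Metric.mem_ball, dist_comm], q, ?_, rfl⟩
  have hnum : 0 < q.num := Rat.num_pos.2 hq
  obtain ⟨k, hk, h1, h2⟩ := exists_mul_mem_of_upper_density_one A hdens q.num.toNat q.den
    (by omega) q.den_pos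
  refine ⟨_, h1, _, h2, ?_⟩
  have hcast : ((q.num.toNat : ℕ) : ℚ) = (q.num : ℚ) := by
    exact_mod_cast Int.toNat_of_nonneg hnum.le
  have hk' : (k : ℚ) ≠ 0 := by exact_mod_cast hk.ne'
  push_cast
  rw [mul_div_mul_right _ _ hk', hcast, Rat.num_div_den]
end

section
/- For every real number α with 0 ≤ α < 1 there exists a set A ⊆ ℕ whose lower asymptotic density satisfies liminf_{n→∞} |A ∩ [1,n]|/n ≥ α, and such that for every prime p the quotient set R(A) = {a/a' : a, a' ∈ A} is not dense in ℚ_p. -/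
open Filter

/-!
Fix `K` with `2 * 2⁻ᴷ ≤ 1 - α` and let `A` be the set of positive integers that are divisible by
`p ^ (p + K)` for no prime `p`.

* At most `n / p ^ (p + K) ≤ n * 2⁻ᴷ * 2⁻ᵖ` elements of `[1, n]` are removed on account of `p`, so
  at most `n * (1 - α)` are removed altogether: the counting bound holds for every `n`, not only
  asymptotically (`ncard_bound`).
* For `a, b ∈ A` we have `‖a‖ ≤ 1` and `‖b‖ > p ^ (-(p + K))` in `ℚ_[p]`, hence
  `‖a / b‖ ≤ p ^ (p + K)`; a bounded set is not dense in `ℚ_[p]` (`not_dense_quotients`).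
-/

/-- The positive integers divisible by none of the prime powers `p ^ (p + K)`. -/
def powFree (K : ℕ) : Set ℕ := {n | 0 < n ∧ ∀ p : ℕ, p.Prime → ¬ p ^ (p + K) ∣ n}

lemma ncard_bound (K n : ℕ) :
    (n : ℝ) * (1 - 2 * (1 / 2) ^ K) ≤ ((powFree K ∩ Set.Icc 1 n).ncard : ℝ) := by
  classical
  set S := (Finset.Ioc 0 n).filter (fun m => m ∈ powFree K)
  set B := (Finset.Ioc 0 n).filter (fun m => m ∉ powFree K)
  have hS : powFree K ∩ Set.Icc 1 n = (S : Set ℕ) := by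
    ext m
    simp only [S, Finset.coe_filter, Finset.mem_Ioc, Set.mem_inter_iff, Set.mem_Icc,
      Set.mem_ofPred_eq]
    constructor
    · rintro ⟨h, h1, h2⟩; exact ⟨⟨h1, h2⟩, h⟩
    · rintro ⟨⟨h1, h2⟩, h⟩; exact ⟨h, h1, h2⟩
  have hSB : S.card + B.card = n := by
    have := Finset.card_filter_add_card_filter_not (s := Finset.Ioc 0 n)
      (fun m => m ∈ powFree K)
    simpa using this
  -- A prime `p` with `p ^ (p + K) ∣ m` and `1 ≤ m ≤ n` satisfies `p ≤ n`: the union is finite.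
  have hB : B ⊆ ((Finset.range (n + 1)).filter Nat.Prime).biUnion
      (fun p => (Finset.Ioc 0 n).filter (fun m => p ^ (p + K) ∣ m)) := by
    intro m hm
    simp only [B, Finset.mem_filter, Finset.mem_Ioc, powFree, Set.mem_ofPred_eq, not_and,
      not_forall, not_not] at hm
    obtain ⟨⟨h1, h2⟩, h3⟩ := hm
    obtain ⟨p, hp, hd⟩ := h3 h1
    simp only [Finset.mem_biUnion, Finset.mem_filter, Finset.mem_range, Finset.mem_Ioc]
    have hle : p ≤ m := Nat.le_of_dvd h1
      ((dvd_pow_self p (by have := hp.pos; omega)).trans hd)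
    exact ⟨p, ⟨by omega, hp⟩, ⟨h1, h2⟩, hd⟩
  have hterm : ∀ p : ℕ, p.Prime →
      ((((Finset.Ioc 0 n).filter (fun m => p ^ (p + K) ∣ m)).card : ℕ) : ℝ)
        ≤ n * (1 / 2) ^ K * (1 / 2) ^ p := by
    intro p hp
    rw [Nat.Ioc_filter_dvd_card_eq_div]
    have h2 : (2 : ℝ) ≤ p := by exact_mod_cast hp.two_le
    calc ((n / p ^ (p + K) : ℕ) : ℝ) ≤ (n : ℝ) / ((p ^ (p + K) : ℕ) : ℝ) := Nat.cast_div_le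
      _ = n / (p : ℝ) ^ (p + K) := by push_cast; rfl
      _ ≤ n / (2 : ℝ) ^ (p + K) := by gcongr
      _ = n * (1 / 2) ^ K * (1 / 2) ^ p := by
        rw [pow_add, one_div_pow, one_div_pow]; field_simp
  have hBc : (B.card : ℝ) ≤ n * (1 / 2) ^ K * 2 := by
    calc (B.card : ℝ) ≤ ∑ p ∈ (Finset.range (n + 1)).filter Nat.Prime,
          ((((Finset.Ioc 0 n).filter (fun m => p ^ (p + K) ∣ m)).card : ℕ) : ℝ) := by
          exact_mod_cast (Finset.card_le_card hB).trans Finset.card_biUnion_le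
      _ ≤ ∑ p ∈ (Finset.range (n + 1)).filter Nat.Prime, n * (1 / 2 : ℝ) ^ K * (1 / 2) ^ p :=
          Finset.sum_le_sum fun p hp => hterm p (Finset.mem_filter.1 hp).2
      _ ≤ ∑ p ∈ Finset.range (n + 1), n * (1 / 2 : ℝ) ^ K * (1 / 2) ^ p :=
          Finset.sum_le_sum_of_subset_of_nonneg (Finset.filter_subset _ _)
            fun _ _ _ => by positivity
      _ ≤ n * (1 / 2) ^ K * 2 := by
          rw [← Finset.mul_sum]
          exact mul_le_mul_of_nonneg_left (sum_geometric_two_le _) (by positivity)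
  rw [hS, Set.ncard_coe_finset]
  have : (S.card : ℝ) + B.card = n := by exact_mod_cast hSB
  linarith

lemma not_dense_quotients (K p : ℕ) [hp : Fact p.Prime] :
    ¬ Dense ((fun q : ℚ => (q : ℚ_[p])) ''
      {q : ℚ | ∃ a ∈ powFree K, ∃ b ∈ powFree K, q = (a : ℚ) / (b : ℚ)}) := by
  intro hd
  have hp1 : (1 : ℝ) < p := by exact_mod_cast hp.out.one_lt
  have hsub : ((fun q : ℚ => (q : ℚ_[p])) ''
      {q : ℚ | ∃ a ∈ powFree K, ∃ b ∈ powFree K, q = (a : ℚ) / (b : ℚ)}) ⊆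
      Metric.closedBall (0 : ℚ_[p]) ((p : ℝ) ^ (p + K)) := by
    rintro _ ⟨_, ⟨a, -, b, hb, rfl⟩, rfl⟩
    have ha1 : ‖(a : ℚ_[p])‖ ≤ 1 := by exact_mod_cast Padic.norm_int_le_one (p := p) (a : ℤ)
    have hb1 : (p : ℝ) ^ (-((p + K : ℕ) : ℤ)) < ‖(b : ℚ_[p])‖ := by
      have h := hb.2 p hp.out
      contrapose! h
      have h' := (Padic.norm_int_le_pow_iff_dvd (p := p) (b : ℤ) (p + K)).1 (by exact_mod_cast h)
      exact_mod_cast h'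
    rw [zpow_neg, zpow_natCast] at hb1
    have hpos : (0 : ℝ) < (p : ℝ) ^ (p + K) := by positivity
    rw [mem_closedBall_zero_iff]
    push_cast
    rw [norm_div, div_le_iff₀ ((inv_pos.2 hpos).trans hb1)]
    calc ‖(a : ℚ_[p])‖ ≤ 1 := ha1
      _ = (p : ℝ) ^ (p + K) * ((p : ℝ) ^ (p + K))⁻¹ := (mul_inv_cancel₀ hpos.ne').symm
      _ ≤ _ := by gcongr
  have huniv := (hd.mono hsub).closure_eq
  rw [Metric.isClosed_closedBall.closure_eq] at huniv
  have hmem : ((p : ℚ_[p]) ^ (p + K + 1))⁻¹ ∈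
      Metric.closedBall (0 : ℚ_[p]) ((p : ℝ) ^ (p + K)) := huniv ▸ Set.mem_univ _
  rw [mem_closedBall_zero_iff, norm_inv, norm_pow, Padic.norm_p, inv_pow, inv_inv] at hmem
  exact absurd hmem (not_le.2 (pow_lt_pow_right₀ hp1 (Nat.lt_succ_self _)))

/-- For every `0 ≤ α < 1` there is a set `A ⊆ ℕ = {1,2,…}` with lower
asymptotic density at least `α` whose quotient set is dense in no `ℚ_[p]`. -/
theorem exists_lower_density_ge_quotient_dense_nowhere
    (α : ℝ) (h0 : 0 ≤ α) (h1 : α < 1) :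
    ∃ A : Set ℕ, (∀ a ∈ A, 0 < a) ∧
      α ≤ Filter.liminf (fun n : ℕ => ((A ∩ Set.Icc 1 n).ncard : ℝ) / n) Filter.atTop ∧
      ∀ (p : ℕ) [Fact p.Prime],
        ¬ Dense ((fun q : ℚ => (q : ℚ_[p])) ''
          {q : ℚ | ∃ a ∈ A, ∃ b ∈ A, q = (a : ℚ) / (b : ℚ)}) := by
  obtain ⟨K, hK⟩ := exists_pow_lt_of_lt_one (show (0 : ℝ) < (1 - α) / 2 by linarith)
    (show (1 / 2 : ℝ) < 1 by norm_num)
  refine ⟨powFree K, fun a ha => ha.1, ?_, fun p _ => not_dense_quotients K p⟩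
  -- In `ℝ` the liminf is only meaningful once the sequence is known to be bounded above.
  have hbdd : IsBoundedUnder (· ≤ ·) atTop
      (fun n : ℕ => ((powFree K ∩ Set.Icc 1 n).ncard : ℝ) / n) := by
    refine isBoundedUnder_of ⟨1, fun n => div_le_one_of_le₀ ?_ (Nat.cast_nonneg n)⟩
    have h : (powFree K ∩ Set.Icc 1 n).ncard ≤ (Set.Icc 1 n).ncard :=
      Set.ncard_le_ncard Set.inter_subset_right (Set.finite_Icc 1 n)
    have h' : (Set.Icc 1 n).ncard = n := by
      rw [← Finset.coe_Icc, Set.ncard_coe_finset, Nat.card_Icc, Nat.add_sub_cancel]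
    exact_mod_cast h.trans h'.le
  refine le_liminf_of_le hbdd.isCoboundedUnder_ge ?_
  filter_upwards [eventually_gt_atTop 0] with n hn
  have hn' : (0 : ℝ) < n := by exact_mod_cast hn
  rw [le_div_iff₀ hn', mul_comm]
  exact (mul_le_mul_of_nonneg_left (by linarith) hn'.le).trans (ncard_bound K n)
end

section
/- There exists a set A ⊆ ℕ with asymptotic density zero (i.e., lim_{n→∞} |A ∩ [1,n]|/n = 0) such that for every prime p, the quotient set R(A) = {a/a' : a, a' ∈ A} is dense in ℚ_p. -/
/-!
Take `A = {aᵢ : i ∈ ℕ}` with `aᵢ = (i.unpair).1 + (i!)²`. Since `aᵢ ≥ i²`, at most `√n + 1`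
elements of `A` are `≤ n`, so `A` has density zero. On the other hand `i! → 0` in every `ℚ_[p]`,
and every `m : ℕ` is the first component of `i.unpair` for arbitrarily large `i`, namely for
`i = Nat.pair m j`; hence the `p`-adic closure of `A` contains `ℕ`, and therefore `ℤ_[p]`.
As `ℚ_[p]` is the fraction field of `ℤ_[p]`, continuity of division away from `0` shows that
the quotients of elements of `A` are dense.
-/

open Filter

/-- The sparse sequence whose range is the required set. -/
def sparseSeq (i : ℕ) : ℕ := i.unpair.1 + i.factorial ^ 2

lemma sq_le_sparseSeq (i : ℕ) : i ^ 2 ≤ sparseSeq i :=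
  (Nat.pow_le_pow_left i.self_le_factorial 2).trans (Nat.le_add_left _ _)

lemma ncard_range_sparseSeq_le (n : ℕ) :
    (Set.range sparseSeq ∩ Set.Icc 1 n).ncard ≤ n.sqrt + 1 := by
  have hsub : Set.range sparseSeq ∩ Set.Icc 1 n ⊆
      ((Finset.range (n.sqrt + 1)).image sparseSeq : Finset ℕ) := by
    rintro _ ⟨⟨i, rfl⟩, -, hi⟩
    simp only [Finset.coe_image, Finset.coe_range]
    refine ⟨i, ?_, rfl⟩
    exact Nat.lt_succ_of_le (Nat.le_sqrt'.2 ((sq_le_sparseSeq i).trans hi))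
  calc _ ≤ (((Finset.range (n.sqrt + 1)).image sparseSeq : Finset ℕ) : Set ℕ).ncard :=
        Set.ncard_le_ncard hsub (Finset.finite_toSet _)
    _ = ((Finset.range (n.sqrt + 1)).image sparseSeq).card := Set.ncard_coe_finset _
    _ ≤ _ := Finset.card_image_le.trans (by simp)

lemma tendsto_density_sparseSeq :
    Tendsto (fun n : ℕ => ((Set.range sparseSeq ∩ Set.Icc 1 n).ncard : ℝ) / n)
      atTop (nhds 0) := by
  have hlim : Tendsto (fun n : ℕ => (√(n : ℝ))⁻¹ + (n : ℝ)⁻¹) atTop (nhds 0) := by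
    simpa using ((tendsto_inv_atTop_zero.comp Real.tendsto_sqrt_atTop).comp
      tendsto_natCast_atTop_atTop).add (tendsto_inv_atTop_zero.comp
        (tendsto_natCast_atTop_atTop (R := ℝ)))
  refine squeeze_zero (fun n => by positivity) (fun n => ?_) hlim
  have h1 : ((Set.range sparseSeq ∩ Set.Icc 1 n).ncard : ℝ) ≤ √(n : ℝ) + 1 := by
    have h2 : ((Set.range sparseSeq ∩ Set.Icc 1 n).ncard : ℝ) ≤ (n.sqrt : ℝ) + 1 := by
      exact_mod_cast ncard_range_sparseSeq_le n
    linarith [Real.nat_sqrt_le_real_sqrt (a := n)]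
  calc _ ≤ (√(n : ℝ) + 1) / n := by gcongr
    _ = _ := by rw [add_div, Real.sqrt_div_self, one_div]

lemma tendsto_factorial_padic (p : ℕ) [Fact p.Prime] :
    Tendsto (fun i : ℕ => ((i.factorial : ℕ) : ℚ_[p])) atTop (nhds 0) := by
  have hp : 1 < (p : ℝ) := by exact_mod_cast (Fact.out : p.Prime).one_lt
  rw [Metric.tendsto_atTop]
  intro ε hε
  obtain ⟨k, hk⟩ := exists_pow_lt_of_lt_one hε (inv_lt_one_of_one_lt₀ hp)
  refine ⟨p ^ k, fun i hi => ?_⟩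
  have hdvd : ((p ^ k : ℕ) : ℤ) ∣ (i.factorial : ℤ) := by
    exact_mod_cast Nat.dvd_factorial (pow_pos (Fact.out : p.Prime).pos k) hi
  have hnorm := (Padic.norm_int_le_pow_iff_dvd (p := p) (i.factorial : ℤ) k).2
    (by exact_mod_cast hdvd)
  rw [dist_zero_right]
  refine lt_of_le_of_lt ?_ hk
  simpa using hnorm

lemma natCast_mem_closure (p : ℕ) [Fact p.Prime] (m : ℕ) :
    (m : ℚ_[p]) ∈ closure ((fun n : ℕ => (n : ℚ_[p])) '' Set.range sparseSeq) := by
  have hpair : Tendsto (fun j => Nat.pair m j) atTop atTop :=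
    tendsto_atTop_mono (fun j => Nat.right_le_pair m j) tendsto_id
  have hlim : Tendsto (fun j => ((sparseSeq (Nat.pair m j) : ℕ) : ℚ_[p])) atTop
      (nhds (m : ℚ_[p])) := by
    simpa [sparseSeq] using
      (((tendsto_factorial_padic p).comp hpair).pow 2).const_add (m : ℚ_[p])
  exact mem_closure_of_tendsto hlim
    (Eventually.of_forall fun j => ⟨_, ⟨_, rfl⟩, rfl⟩)

lemma padicInt_mem_closure (p : ℕ) [Fact p.Prime] (x : ℤ_[p]) :
    (x : ℚ_[p]) ∈ closure ((fun n : ℕ => (n : ℚ_[p])) '' Set.range sparseSeq) := by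
  refine (PadicInt.denseRange_natCast (p := p)).induction_on
    (p := fun x : ℤ_[p] => (x : ℚ_[p]) ∈
      closure ((fun n : ℕ => (n : ℚ_[p])) '' Set.range sparseSeq)) x ?_ ?_
  · exact isClosed_closure.preimage continuous_subtype_val
  · intro m
    simpa using natCast_mem_closure p m

/-- There is a set `A ⊆ ℕ = {1,2,…}` of asymptotic density zero whose quotient
set is dense in every `ℚ_[p]`. -/
theorem exists_density_zero_quotient_dense_everywhere :
    ∃ A : Set ℕ, (∀ a ∈ A, 0 < a) ∧
      Filter.Tendsto (fun n : ℕ => ((A ∩ Set.Icc 1 n).ncard : ℝ) / n) Filter.atTop (nhds 0) ∧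
      ∀ (p : ℕ) [Fact p.Prime],
        Dense ((fun q : ℚ => (q : ℚ_[p])) ''
          {q : ℚ | ∃ a ∈ A, ∃ b ∈ A, q = (a : ℚ) / (b : ℚ)}) := by
  refine ⟨Set.range sparseSeq, ?_, tendsto_density_sparseSeq, ?_⟩
  · rintro _ ⟨i, rfl⟩
    exact Nat.add_pos_right _ (pow_pos i.factorial_pos 2)
  · intro p _ z
    obtain ⟨x, y, hy, rfl⟩ := IsFractionRing.div_surjective (A := ℤ_[p]) z
    have hy0 : (y : ℚ_[p]) ≠ 0 := by
      simpa using nonZeroDivisors.ne_zero hy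
    have hmem : ((x : ℚ_[p]), (y : ℚ_[p])) ∈
        closure (((fun n : ℕ => (n : ℚ_[p])) '' Set.range sparseSeq) ×ˢ
          ((fun n : ℕ => (n : ℚ_[p])) '' Set.range sparseSeq)) := by
      rw [closure_prod_eq]
      exact ⟨padicInt_mem_closure p x, padicInt_mem_closure p y⟩
    have hcont : ContinuousAt (fun w : ℚ_[p] × ℚ_[p] => w.1 / w.2)
        ((x : ℚ_[p]), (y : ℚ_[p])) :=
      continuousAt_fst.div continuousAt_snd hy0
    refine hcont.continuousWithinAt.mem_closure hmem ?_
    rintro ⟨_, _⟩ ⟨⟨a, ha, rfl⟩, ⟨b, hb, rfl⟩⟩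
    exact ⟨(a : ℚ) / b, ⟨a, ha, b, hb, rfl⟩, by simp⟩
end

section
/- Let S_2 = {a ∈ ℕ : a = x² + y² for some nonnegative integers x, y} be the set of positive integers that are sums of two squares (zero summands permitted). For every prime p, the quotient set R(S_2) is dense in ℚ_p if and only if p ≡ 1 (mod 4). -/
/-!
If `p ≡ 1 (mod 4)`, Hensel's lemma gives a square root `i` of `-1` in `ℚ_[p]`, so the form
`x² + y² = (x + i y)(x - i y)` is hyperbolic and represents every element of `ℚ_[p]`
(`padic_eq_sq_add_sq`). Since `ℚ` is dense in `ℚ_[p]` and `(x, y) ↦ x² + y²` is continuous, the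
values `r² + s²` with `r, s ∈ ℚ` are dense, and each nonzero one is a quotient of sums of two
squares, `((a d)² + (b c)²) / ((c d)² + 0²)`.

Conversely, an explicit element of `ℚ_[p]` cannot be approximated.
If `p ≡ 3 (mod 4)`, sums of two squares have even `p`-adic valuation, and so do their quotients;
thus none is close to `p`, of valuation `1`. If `p = 2`, a quotient close to `3` would give a
solution of `x² + y² = m² t` with `m ≠ 0` and `t ≡ 3 (mod 4)`, which infinite descent on `m`
excludes.
-/

theorem exists_sq_eq_neg_one_padicInt (p : ℕ) [hp : Fact p.Prime] (h : p % 4 = 1) :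
    ∃ i : ℤ_[p], i ^ 2 = -1 := by
  obtain ⟨y, hy⟩ := ZMod.exists_sq_eq_neg_one_iff.2 (show p % 4 ≠ 3 by omega)
  obtain ⟨a, rfl⟩ := ZMod.natCast_zmod_surjective y
  have hdvd : p ∣ a ^ 2 + 1 := by
    rw [← ZMod.natCast_eq_zero_iff]
    push_cast
    rw [pow_two, ← hy]
    ring
  have hcop : p.Coprime (2 * a) := by
    rw [hp.out.coprime_iff_not_dvd]
    intro hd
    rcases (Nat.Prime.dvd_mul hp.out).1 hd with h2 | ha
    · have := Nat.le_of_dvd two_pos h2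
      have := hp.out.two_le
      have : p = 2 := by omega
      omega
    · have : p ∣ 1 := (Nat.dvd_add_right (dvd_pow ha two_ne_zero)).1 hdvd
      exact hp.out.one_lt.ne' (Nat.dvd_one.1 this)
  let F : Polynomial ℤ_[p] := Polynomial.X ^ 2 + 1
  have h1 : ‖F.aeval (a : ℤ_[p])‖ < 1 := by
    have := (PadicInt.norm_natCast_lt_one_iff (p := p)).2 hdvd
    simpa [F] using this
  have h2 : ‖F.derivative.aeval (a : ℤ_[p])‖ = 1 := by
    have := (PadicInt.norm_natCast_eq_one_iff (p := p)).2 hcop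
    push_cast at this
    simpa [F, ← norm_mul, one_add_one_eq_two] using this
  obtain ⟨z, hz, -⟩ := hensels_lemma (F := F) (a := (a : ℤ_[p])) (by rw [h2]; simpa using h1)
  refine ⟨z, ?_⟩
  have : z ^ 2 + 1 = 0 := by simpa [F] using hz
  linear_combination this

theorem padic_eq_sq_add_sq (p : ℕ) [Fact p.Prime] (h : p % 4 = 1) :
    Function.Surjective (fun w : ℚ_[p] × ℚ_[p] => w.1 ^ 2 + w.2 ^ 2) := by
  obtain ⟨i, hi⟩ := exists_sq_eq_neg_one_padicInt p h
  have hi' : (i : ℚ_[p]) ^ 2 = -1 := by exact_mod_cast congrArg (fun t : ℤ_[p] => (t : ℚ_[p])) hi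
  intro z
  refine ⟨((z + 1) / 2, i * (z - 1) / 2), ?_⟩
  simp only
  linear_combination ((z - 1) / 2) ^ 2 * hi'

theorem dense_of_mod_four_eq_one (p : ℕ) [Fact p.Prime] (h : p % 4 = 1) :
    Dense ((fun q : ℚ => (q : ℚ_[p])) ''
      {q : ℚ | ∃ a ∈ {a : ℕ | 0 < a ∧ ∃ x y : ℕ, a = x ^ 2 + y ^ 2},
               ∃ b ∈ {a : ℕ | 0 < a ∧ ∃ x y : ℕ, a = x ^ 2 + y ^ 2},
               q = (a : ℚ) / (b : ℚ)}) := by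
  have hd : DenseRange ((fun w : ℚ_[p] × ℚ_[p] => w.1 ^ 2 + w.2 ^ 2) ∘
      Prod.map ((↑) : ℚ → ℚ_[p]) ((↑) : ℚ → ℚ_[p])) :=
    (padic_eq_sq_add_sq p h).denseRange.comp
      ((Padic.denseRange_ratCast p).prodMap (Padic.denseRange_ratCast p)) (by fun_prop)
  -- `0` is not a quotient of positive integers, but removing it preserves density.
  refine (hd.sdiff_singleton 0).mono ?_
  rintro _ ⟨⟨⟨r, s⟩, rfl⟩, hne⟩
  have hr : (r.den : ℚ) ≠ 0 := by exact_mod_cast r.den_nz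
  have hs : (s.den : ℚ) ≠ 0 := by exact_mod_cast s.den_nz
  refine ⟨r ^ 2 + s ^ 2, ⟨(r.num.natAbs * s.den) ^ 2 + (s.num.natAbs * r.den) ^ 2, ⟨?_, _, _, rfl⟩,
    (r.den * s.den) ^ 2, ⟨by have := r.den_pos; have := s.den_pos; positivity, _, 0, by simp; rfl⟩,
    ?_⟩, by simp⟩
  · by_contra h0
    have h0' : (r.num.natAbs * s.den) ^ 2 + (s.num.natAbs * r.den) ^ 2 = 0 := by omega
    simp at h0'
    apply hne
    simp [h0'.1, h0'.2]
  · push_cast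
    simp only [Nat.cast_natAbs, Int.cast_abs, mul_pow, sq_abs]
    rw [eq_div_iff (by positivity)]
    have e1 := Rat.mul_den_eq_num r
    have e2 := Rat.mul_den_eq_num s
    rw [← e1, ← e2]
    ring

theorem sq_add_sq_ne_sq_mul (m : ℕ) : m ≠ 0 → ∀ x y t : ℤ, t % 4 = 3 →
    x ^ 2 + y ^ 2 ≠ (m : ℤ) ^ 2 * t := by
  induction m using Nat.strong_induction_on with
  | _ m ih =>
    intro hm x y t ht h
    obtain ⟨s, rfl⟩ : ∃ s, t = 4 * s + 3 := ⟨t / 4, by omega⟩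
    rcases Nat.even_or_odd' m with ⟨k, rfl | rfl⟩
    · -- `m` even: then `4 ∣ x² + y²` makes `x` and `y` even, and a factor `4` cancels.
      obtain ⟨a, ha | ha⟩ := Int.even_or_odd' x <;> obtain ⟨b, hb | hb⟩ := Int.even_or_odd' y <;>
        subst ha hb <;> push_cast at h <;> ring_nf at h
      · refine ih k (by omega) (by omega) a b _ ht ?_
        linarith
      all_goals omega
    · obtain ⟨a, ha | ha⟩ := Int.even_or_odd' x <;> obtain ⟨b, hb | hb⟩ := Int.even_or_odd' y <;>
        subst ha hb <;> push_cast at h <;> ring_nf at h <;> omega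

/-- Sums of two squares have even valuation at a prime `p ≡ 3 (mod 4)`. -/
theorem even_padicValNat_sq_add_sq (p : ℕ) [hp : Fact p.Prime] (h : p % 4 = 3) (x y : ℕ) :
    Even (padicValNat p (x ^ 2 + y ^ 2)) := by
  by_cases hmem : p ∈ (x ^ 2 + y ^ 2).primeFactors
  · exact Nat.eq_sq_add_sq_iff.1 ⟨x, y, rfl⟩ p hmem h
  · rw [Nat.mem_primeFactors] at hmem
    by_cases h0 : x ^ 2 + y ^ 2 = 0
    · simp [h0]
    · rw [padicValNat.eq_zero_of_not_dvd fun hd => hmem ⟨hp.out, hd, h0⟩]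
      exact Even.zero

/-- A rational close to `3` in `ℚ_[2]` has numerator and denominator whose product is
`3` modulo `4`. -/
theorem num_mul_den_mod_four (q : ℚ) (h : ‖(q : ℚ_[2]) - 3‖ ≤ (2 : ℝ) ^ (-2 : ℤ)) :
    (q.num * q.den) % 4 = 3 := by
  have hden : (q : ℚ_[2]) * (q.den : ℚ_[2]) = (q.num : ℚ_[2]) := by
    exact_mod_cast congrArg (fun t : ℚ => (t : ℚ_[2])) (Rat.mul_den_eq_num q)
  have hle : ‖((q.num - 3 * q.den : ℤ) : ℚ_[2])‖ ≤ ((2 : ℕ) : ℝ) ^ (-(2 : ℕ) : ℤ) := by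
    have e : ((q.num - 3 * q.den : ℤ) : ℚ_[2]) = ((q : ℚ_[2]) - 3) * ((q.den : ℤ) : ℚ_[2]) := by
      push_cast
      rw [← hden]
      ring
    rw [e, norm_mul]
    calc _ ≤ (2 : ℝ) ^ (-2 : ℤ) * 1 :=
          mul_le_mul h (Padic.norm_int_le_one _) (norm_nonneg _) (by positivity)
      _ = _ := by norm_num
  have hdvd := (Padic.norm_int_le_pow_iff_dvd _ _).1 hle
  norm_num at hdvd
  -- The denominator is odd, as otherwise the numerator would be even too.
  have hodd : (q.den : ℤ) % 2 = 1 := by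
    by_contra hc
    have h1 : 2 ∣ q.den := by omega
    have h2 : 2 ∣ q.num.natAbs := by omega
    have := Nat.dvd_gcd h2 h1
    rw [q.reduced.gcd_eq_one] at this
    omega
  obtain ⟨k, hk⟩ := hdvd
  obtain ⟨l, hl⟩ : ∃ l : ℤ, (q.den : ℤ) = 2 * l + 1 := ⟨(q.den : ℤ) / 2, by omega⟩
  have e : q.num * q.den = 4 * (k * (2 * l + 1) + 3 * (l ^ 2 + l)) + 3 := by
    rw [show q.num = 3 * q.den + 4 * k by linarith, hl]
    ring
  rw [e]
  omega

theorem not_dense_two : ¬ Dense ((fun q : ℚ => (q : ℚ_[2])) ''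
      {q : ℚ | ∃ a ∈ {a : ℕ | 0 < a ∧ ∃ x y : ℕ, a = x ^ 2 + y ^ 2},
               ∃ b ∈ {a : ℕ | 0 < a ∧ ∃ x y : ℕ, a = x ^ 2 + y ^ 2},
               q = (a : ℚ) / (b : ℚ)}) := by
  intro hd
  obtain ⟨_, ⟨q, ⟨a, ⟨ha, x, y, hxy⟩, b, ⟨hb, u, v, huv⟩, hq⟩, rfl⟩, hlt⟩ :=
    hd.exists_dist_lt 3 (show (0 : ℝ) < (2 : ℝ) ^ (-2 : ℤ) by positivity)
  rw [dist_comm, dist_eq_norm] at hlt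
  have hmod := num_mul_den_mod_four q hlt.le
  -- With `q = a / b` and `d` its denominator, `d² a b = b² (q.num d)`, and `a b` is a sum of two
  -- squares by the Brahmagupta identity.
  refine sq_add_sq_ne_sq_mul b hb.ne' (q.den * (x * u - y * v)) (q.den * (x * v + y * u)) _ hmod ?_
  have hbQ : (b : ℚ) ≠ 0 := by exact_mod_cast hb.ne'
  have e1 : q.num * (b : ℤ) = a * q.den := by
    have h2 : (q.num : ℚ) * b = a * q.den := by
      have hqb : q * b = a := by rw [hq, div_mul_cancel₀ _ hbQ]
      rw [← Rat.mul_den_eq_num q, ← hqb]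
      ring
    exact_mod_cast h2
  have hab : (a : ℤ) = x ^ 2 + y ^ 2 := by exact_mod_cast hxy
  have hbb : (b : ℤ) = u ^ 2 + v ^ 2 := by exact_mod_cast huv
  calc _ = (q.den : ℤ) ^ 2 * ((x ^ 2 + y ^ 2) * (u ^ 2 + v ^ 2)) := by ring
    _ = (q.den : ℤ) ^ 2 * (a * b) := by rw [hab, hbb]
    _ = _ := by linear_combination (-(q.den : ℤ) * b) * e1

theorem not_dense_of_mod_four_eq_three (p : ℕ) [hp : Fact p.Prime] (h : p % 4 = 3) :
    ¬ Dense ((fun q : ℚ => (q : ℚ_[p])) ''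
      {q : ℚ | ∃ a ∈ {a : ℕ | 0 < a ∧ ∃ x y : ℕ, a = x ^ 2 + y ^ 2},
               ∃ b ∈ {a : ℕ | 0 < a ∧ ∃ x y : ℕ, a = x ^ 2 + y ^ 2},
               q = (a : ℚ) / (b : ℚ)}) := by
  intro hd
  have hp0 : (p : ℚ_[p]) ≠ 0 := by exact_mod_cast hp.out.ne_zero
  obtain ⟨_, ⟨q, ⟨a, ⟨ha, x, y, rfl⟩, b, ⟨hb, u, v, rfl⟩, rfl⟩, rfl⟩, hlt⟩ :=
    hd.exists_dist_lt (p : ℚ_[p]) (norm_pos_iff.2 hp0)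
  rw [dist_comm, dist_eq_norm] at hlt
  have hn := Padic.norm_eq_of_norm_sub_lt_right hlt
  have ea := even_padicValNat_sq_add_sq p h x y
  have eb := even_padicValNat_sq_add_sq p h u v
  generalize x ^ 2 + y ^ 2 = a at *
  generalize u ^ 2 + v ^ 2 = b at *
  have ha0 : (a : ℚ_[p]) ≠ 0 := by exact_mod_cast ha.ne'
  have hb0 : (b : ℚ_[p]) ≠ 0 := by exact_mod_cast hb.ne'
  have hmul : ‖(a : ℚ_[p])‖ = ‖(p : ℚ_[p]) * b‖ := by
    rw [norm_mul, ← hn, ← norm_mul]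
    push_cast
    rw [div_mul_cancel₀ _ hb0]
  rw [Padic.norm_eq_zpow_neg_valuation ha0, Padic.norm_eq_zpow_neg_valuation (mul_ne_zero hp0 hb0),
    zpow_right_inj₀ (by exact_mod_cast hp.out.pos) (by exact_mod_cast hp.out.ne_one),
    Padic.valuation_mul hp0 hb0, Padic.valuation_p, Padic.valuation_natCast,
    Padic.valuation_natCast] at hmul
  obtain ⟨k, hk⟩ := ea
  obtain ⟨l, hl⟩ := eb
  omega

/-- For the set `S₂` of positive integers that are sums of two squares
(zero permitted), `R(S₂)` is dense in `ℚ_[p]` iff `p ≡ 1 (mod 4)`. -/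
theorem sums_of_two_squares_quotient_dense_iff
    (p : ℕ) [Fact p.Prime] :
    Dense ((fun q : ℚ => (q : ℚ_[p])) ''
      {q : ℚ | ∃ a ∈ {a : ℕ | 0 < a ∧ ∃ x y : ℕ, a = x ^ 2 + y ^ 2},
               ∃ b ∈ {a : ℕ | 0 < a ∧ ∃ x y : ℕ, a = x ^ 2 + y ^ 2},
               q = (a : ℚ) / (b : ℚ)}) ↔ p % 4 = 1 := by
  refine ⟨fun hd => ?_, dense_of_mod_four_eq_one p⟩
  rcases (Fact.out : p.Prime).eq_two_or_odd with rfl | hodd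
  · exact absurd hd not_dense_two
  · by_contra h1
    exact not_dense_of_mod_four_eq_three p (by omega) hd
end

section
/- For every integer n ≥ 3, let C_n = {a ∈ ℕ : a = x_1³ + ⋯ + x_n³ for some nonnegative integers x_1, …, x_n} be the set of positive integers that are sums of n cubes (zero summands permitted). Then for every prime p, the quotient set R(C_n) is dense in ℚ_p. -/
/-!
The binary form `x³ + y³` already suffices. It has the nonsingular zero `(1, -1)`, so by Hensel's
lemma every `t : ℤ_[p]` with `‖t‖ < ‖3‖²` is of the form `z³ + (-1)³` with `z : ℤ_[p]`. Given
`c : ℚ_[p]`, apply this to `t = c * p^(3k)` with `k` large, so that `c = (z³ + (-1)³) / (p^k)³`.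
Approximating `z` and `-1` in `ℤ_[p]` by positive integers `u`, `v` approximates `c` by
`(u³ + v³) / (p^k)³`, a quotient of two positive sums of cubes.
-/

/-- Hensel's lemma for `X ^ 3 - (1 + t)` at the approximate root `1`. -/
theorem exists_cube_eq_one_add {p : ℕ} [Fact p.Prime] {t : ℤ_[p]} (ht : ‖t‖ < ‖(3 : ℤ_[p])‖ ^ 2) :
    ∃ z : ℤ_[p], z ^ 3 = 1 + t := by
  obtain ⟨z, hz, -⟩ := hensels_lemma
    (F := (Polynomial.X ^ 3 - Polynomial.C (1 + t) : Polynomial ℤ_[p])) (a := (1 : ℤ_[p]))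
    (by
      have h21 : (2 + 1 : ℤ_[p]) = 3 := by norm_num
      simpa [h21] using ht)
  exact ⟨z, by simpa [sub_eq_zero] using hz⟩

theorem exists_sum_two_cubes_div {p : ℕ} [Fact p.Prime] (c : ℚ_[p]) :
    ∃ (k : ℕ) (z : ℤ_[p]), c = ((z : ℚ_[p]) ^ 3 + (-1) ^ 3) / ((p : ℚ_[p]) ^ k) ^ 3 := by
  have hp : (p : ℚ_[p]) ≠ 0 := by exact_mod_cast (Fact.out : p.Prime).ne_zero
  have h3 : 0 < ‖(3 : ℤ_[p])‖ ^ 2 := by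
    have : (3 : ℤ_[p]) ≠ 0 := by norm_num
    positivity
  have hlim : Filter.Tendsto (fun k : ℕ => ‖c * ((p : ℚ_[p]) ^ k) ^ 3‖) Filter.atTop (nhds 0) := by
    have h0 := tendsto_pow_atTop_nhds_zero_of_norm_lt_one (Padic.norm_p_lt_one (p := p))
    simpa using ((h0.pow 3).const_mul c).norm
  obtain ⟨k, hk1, hk2⟩ :=
    ((hlim.eventually_lt_const one_pos).and (hlim.eventually_lt_const h3)).exists
  obtain ⟨t, ht⟩ : ∃ t : ℤ_[p], (t : ℚ_[p]) = c * ((p : ℚ_[p]) ^ k) ^ 3 := ⟨⟨_, hk1.le⟩, rfl⟩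
  obtain ⟨z, hz⟩ := exists_cube_eq_one_add (t := t) (by rwa [PadicInt.norm_def, ht])
  refine ⟨k, z, ?_⟩
  have hz' : (z : ℚ_[p]) ^ 3 = 1 + c * ((p : ℚ_[p]) ^ k) ^ 3 := by
    have h := congrArg (fun w : ℤ_[p] => (w : ℚ_[p])) hz
    simpa only [PadicInt.coe_pow, PadicInt.coe_add, PadicInt.coe_one, ht] using h
  rw [hz', eq_div_iff (by positivity)]
  ring

theorem exists_fin_sum_cubes {n : ℕ} (hn : 2 ≤ n) (u v : ℕ) :
    ∃ x : Fin n → ℕ, u ^ 3 + v ^ 3 = ∑ i, (x i) ^ 3 := by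
  obtain ⟨m, rfl⟩ := Nat.exists_eq_add_of_le' hn
  exact ⟨Fin.cons u (Fin.cons v 0), by simp [Fin.sum_univ_succ]⟩

/-- Shifting by one keeps the approximating natural numbers positive, so that the numerator in the
quotient is nonzero. -/
theorem denseRange_natCast_add_one (p : ℕ) [Fact p.Prime] :
    DenseRange (fun m : ℕ => ((m : ℤ_[p]) + 1)) :=
  (Homeomorph.addRight (1 : ℤ_[p])).surjective.denseRange.comp PadicInt.denseRange_natCast
    (Homeomorph.addRight (1 : ℤ_[p])).continuous

/-- For `n ≥ 3`, the quotient set of the set `Cₙ` of positive integers that are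
sums of `n` cubes (zero permitted) is dense in every `ℚ_[p]`. -/
theorem sums_of_n_cubes_quotient_dense
    (n : ℕ) (hn : 3 ≤ n) (p : ℕ) [Fact p.Prime] :
    Dense ((fun q : ℚ => (q : ℚ_[p])) ''
      {q : ℚ | ∃ a ∈ {a : ℕ | 0 < a ∧ ∃ x : Fin n → ℕ, a = ∑ i, (x i) ^ 3},
               ∃ b ∈ {a : ℕ | 0 < a ∧ ∃ x : Fin n → ℕ, a = ∑ i, (x i) ^ 3},
               q = (a : ℚ) / (b : ℚ)}) := by
  intro c
  obtain ⟨k, z, hz⟩ := exists_sum_two_cubes_div c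
  have hcont : Continuous (fun w : ℤ_[p] × ℤ_[p] =>
      ((w.1 : ℚ_[p]) ^ 3 + (w.2 : ℚ_[p]) ^ 3) / ((p : ℚ_[p]) ^ k) ^ 3) := by
    simp only [div_eq_mul_inv]
    fun_prop
  have hd := (denseRange_natCast_add_one p).prodMap (denseRange_natCast_add_one p)
  have hc : c = ((z : ℚ_[p]) ^ 3 + ((-1 : ℤ_[p]) : ℚ_[p]) ^ 3) / ((p : ℚ_[p]) ^ k) ^ 3 := by
    simpa using hz
  rw [hc]
  refine map_mem_closure (f := fun w : ℤ_[p] × ℤ_[p] =>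
    ((w.1 : ℚ_[p]) ^ 3 + (w.2 : ℚ_[p]) ^ 3) / ((p : ℚ_[p]) ^ k) ^ 3) hcont (hd (z, -1)) ?_
  rintro _ ⟨⟨u, v⟩, rfl⟩
  refine ⟨(((u + 1) ^ 3 + (v + 1) ^ 3 : ℕ) : ℚ) / (((p ^ k) ^ 3 + 0 ^ 3 : ℕ) : ℚ),
    ⟨_, ⟨by positivity, exists_fin_sum_cubes (by omega) _ _⟩,
      _, ⟨?_, exists_fin_sum_cubes (by omega) _ _⟩, rfl⟩, by simp⟩
  have := (Fact.out : p.Prime).pos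
  positivity
end

section
/- Let r, s be integers and let (a_n) be the integer sequence defined by a_0 = 0, a_1 = 1, a_{n+2} = r·a_{n+1} + s·a_n. Assume the characteristic polynomial x² − r·x − s has two nonzero complex roots α, β such that α/β is not a root of unity. Let A = {a_n : n ≥ 1} and R(A) = {a_m/a_n : m, n ≥ 1}. If p is a prime dividing s but not dividing r, then R(A) is not dense in ℚ_p. -/
/-!
Modulo `p` the recurrence reads `a (n + 2) ≡ r * a (n + 1)`, so `a (n + 1) ≡ r ^ n`, and since
`p ∤ r` every term `a n` with `n ≥ 1` is a `p`-adic unit. All quotients `a m / a n` therefore lie on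
the unit sphere of `ℚ_[p]`, and none of them lies in the open unit ball around `0`.
-/

theorem lucas_first_kind_not_dvd {r s : ℤ} {a : ℕ → ℤ} (ha1 : a 1 = 1)
    (harec : ∀ n, a (n + 2) = r * a (n + 1) + s * a n)
    {p : ℕ} [hp : Fact p.Prime] (hs : (p : ℤ) ∣ s) (hr : ¬ (p : ℤ) ∣ r) (n : ℕ) :
    ¬ (p : ℤ) ∣ a (n + 1) := by
  have hprime : Prime (p : ℤ) := Nat.prime_iff_prime_int.mp hp.out
  induction n with
  | zero => simpa [ha1] using hprime.not_dvd_one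
  | succ k ih =>
    rw [harec k, dvd_add_left (hs.mul_right _)]
    exact hprime.not_dvd_mul hr ih

/-- Let `(a_n)` be the Lucas sequence of the first kind for parameters `r, s`,
whose characteristic polynomial `x² - r·x - s` has two nonzero complex roots
`α, β` with `α/β` not a root of unity.  If `p` is a prime with `p ∣ s` and
`p ∤ r`, then `R({a_n : n ≥ 1})` is not dense in `ℚ_[p]`. -/
theorem lucas_first_kind_quotient_not_dense
    (r s : ℤ) (a : ℕ → ℤ)
    (ha0 : a 0 = 0) (ha1 : a 1 = 1)
    (harec : ∀ n, a (n + 2) = r * a (n + 1) + s * a n)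
    (α β : ℂ) (hα0 : α ≠ 0) (hβ0 : β ≠ 0)
    (hαroot : α ^ 2 - (r : ℂ) * α - (s : ℂ) = 0)
    (hβroot : β ^ 2 - (r : ℂ) * β - (s : ℂ) = 0)
    (hαβ : α ≠ β)
    (hru : ¬ ∃ n : ℕ, 0 < n ∧ (α / β) ^ n = 1)
    (p : ℕ) [Fact p.Prime] (hs : (p : ℤ) ∣ s) (hr : ¬ (p : ℤ) ∣ r) :
    ¬ Dense ((fun q : ℚ => (q : ℚ_[p])) ''
      {q : ℚ | ∃ m n : ℕ, 1 ≤ m ∧ 1 ≤ n ∧ q = ((a m : ℚ)) / ((a n : ℚ))}) := by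
  have hunit : ∀ n, 1 ≤ n → ‖((a n : ℤ) : ℚ_[p])‖ = 1 := by
    intro n hn
    obtain ⟨k, rfl⟩ := Nat.exists_eq_add_of_le' hn
    refine le_antisymm (Padic.norm_int_le_one _) (not_lt.mp fun h => ?_)
    exact lucas_first_kind_not_dvd ha1 harec hs hr k (Padic.norm_intCast_lt_one_iff.mp h)
  intro hd
  obtain ⟨_, ⟨_, ⟨m, n, hm, hn, rfl⟩, rfl⟩, hlt⟩ := hd.exists_dist_lt 0 one_pos
  simp [hunit m hm, hunit n hn] at hlt
end

section
/- Let r, s be integers and let (a_n) be the integer sequence defined by a_0 = 0, a_1 = 1, a_{n+2} = r·a_{n+1} + s·a_n. Assume the characteristic polynomial x² − r·x − s has two nonzero complex roots α, β such that α/β is not a root of unity. Let A = {a_n : n ≥ 1} and R(A) = {a_m/a_n : m, n ≥ 1}. If p is a prime not dividing s, then R(A) is dense in ℚ_p. -/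
/-!
Write `M = !![r, s; 1, 0]`, so that `a n` is the lower left entry of `M ^ n`. As `p ∤ s`, the
reduction of `M` modulo `p ^ t` is invertible, hence `M ^ k ≡ 1 [mod p ^ t]` for some `k > 0`.
By Cayley–Hamilton, `n ↦ a (k n)` satisfies a linear recurrence with coefficients
`tr (M ^ k) ≡ 2` and `-det (M ^ k) ≡ -1`, and therefore `a (k n) = a k * u` with
`u ≡ n [mod p ^ t]` (`exists_mul_eq`). As `a k ≠ 0` (this is where the roots of unity enter,
through Binet's formula), the quotient `a (k n) / a (k m)` equals `u / v` with
`u ≡ n` and `v ≡ m` modulo `p ^ t`.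

An element of `ℚ_[p]` has the form `y / p ^ j` with `y ∈ ℤ_[p]`. Choosing `m = p ^ j` and for `n`
a positive integer congruent to `y` modulo `p ^ t`, and letting `t → ∞`, exhibits `y / p ^ j` as a
limit of quotients of the sequence.
-/

namespace LucasQuotient

open Filter Topology

/-- The companion matrix of `x² - r x - s`. -/
def companion (r s : ℤ) : Matrix (Fin 2) (Fin 2) ℤ := !![r, s; 1, 0]

/-- The Cayley–Hamilton recurrence for the powers of a `2 × 2` matrix. -/
lemma pow_add_two_eq (N : Matrix (Fin 2) (Fin 2) ℤ) (n : ℕ) :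
    N ^ (n + 2) = N.trace • N ^ (n + 1) - N.det • N ^ n := by
  have h : N ^ 2 = N.trace • N - N.det • (1 : Matrix (Fin 2) (Fin 2) ℤ) := by
    ext i j
    rw [Matrix.sub_apply, Matrix.smul_apply, Matrix.smul_apply, smul_eq_mul, smul_eq_mul]
    fin_cases i <;> fin_cases j <;>
      simp [pow_two, Matrix.mul_apply, Matrix.trace, Matrix.det_fin_two] <;> ring
  rw [pow_add, h, mul_sub, mul_smul_comm, mul_smul_comm, mul_one, ← pow_succ]

lemma companion_pow_apply {r s : ℤ} {a : ℕ → ℤ} (ha0 : a 0 = 0) (ha1 : a 1 = 1)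
    (harec : ∀ n, a (n + 2) = r * a (n + 1) + s * a n) (n : ℕ) :
    (companion r s ^ n) 1 0 = a n := by
  induction n using Nat.twoStepInduction with
  | zero => simp [ha0]
  | one => simp [companion, ha1]
  | more n h0 h1 =>
    rw [pow_add_two_eq, Matrix.sub_apply, Matrix.smul_apply, Matrix.smul_apply, h0, h1, harec]
    simp [companion, Matrix.trace, Matrix.det_fin_two]

/-- The companion matrix has finite order modulo `q` when `s` is prime to `q`; the conclusion
records this through the trace and the determinant. -/
lemma exists_pow_trace_det {r s : ℤ} {q : ℕ} (hq : q ≠ 0) (h : IsCoprime s (q : ℤ)) :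
    ∃ k, 0 < k ∧ (q : ℤ) ∣ (companion r s ^ k).trace - 2 ∧
      (q : ℤ) ∣ (companion r s ^ k).det - 1 := by
  have : NeZero q := ⟨hq⟩
  let f := Int.castRingHom (ZMod q)
  have hu : IsUnit (f.mapMatrix (companion r s)) := by
    rw [Matrix.isUnit_iff_isUnit_det, ← RingHom.map_det]
    have hs : IsUnit (s : ZMod q) := by
      obtain ⟨x, y, hxy⟩ := h
      refine IsUnit.of_mul_eq_one (x : ZMod q) ?_
      have := congrArg (Int.cast : ℤ → ZMod q) hxy
      push_cast at this
      simpa [mul_comm] using this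
    simpa [f, companion, Matrix.det_fin_two] using hs
  obtain ⟨U, hU⟩ := hu
  have hk : f.mapMatrix (companion r s ^ orderOf U) = 1 := by
    rw [map_pow, ← hU, ← Units.val_pow_eq_pow_val, pow_orderOf_eq_one, Units.val_one]
  refine ⟨orderOf U, orderOf_pos U, ?_, ?_⟩
  · rw [← ZMod.intCast_zmod_eq_zero_iff_dvd]
    have h00 := congrFun (congrFun hk 0) 0
    have h11 := congrFun (congrFun hk 1) 1
    simp [f] at h00 h11
    simp [Matrix.trace, h00, h11]
    norm_num
  · rw [← ZMod.intCast_zmod_eq_zero_iff_dvd]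
    have hd := f.map_det (companion r s ^ orderOf U)
    rw [hk, Matrix.det_one] at hd
    simp only [f, eq_intCast] at hd
    rw [Int.cast_sub, hd]
    simp

/-- Along suitable multiples of `k`, the sequence `a` is `a k` times a sequence of integers that is
congruent to the identity modulo `q`. -/
lemma exists_mul_eq {r s : ℤ} {a : ℕ → ℤ} (ha0 : a 0 = 0) (ha1 : a 1 = 1)
    (harec : ∀ n, a (n + 2) = r * a (n + 1) + s * a n)
    {q : ℕ} (hq : q ≠ 0) (h : IsCoprime s (q : ℤ)) :
    ∃ k, 0 < k ∧ ∀ n : ℕ, ∃ u : ℤ, a (k * n) = a k * u ∧ (q : ℤ) ∣ u - n := by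
  obtain ⟨k, hk, ⟨c, hc⟩, ⟨d, hd⟩⟩ := exists_pow_trace_det (r := r) hq h
  refine ⟨k, hk, fun n => ?_⟩
  have rec_k (n : ℕ) : a (k * (n + 2)) =
      (companion r s ^ k).trace * a (k * (n + 1)) - (companion r s ^ k).det * a (k * n) := by
    simp only [← companion_pow_apply ha0 ha1 harec, pow_mul]
    rw [pow_add_two_eq, Matrix.sub_apply, Matrix.smul_apply, Matrix.smul_apply, smul_eq_mul,
      smul_eq_mul]
  induction n using Nat.twoStepInduction with
  | zero => exact ⟨0, by simp [ha0], by simp⟩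
  | one => exact ⟨1, by simp, by simp⟩
  | more n h0 h1 =>
    obtain ⟨u, hu, e, he⟩ := h0
    obtain ⟨v, hv, g, hg⟩ := h1
    refine ⟨(companion r s ^ k).trace * v - (companion r s ^ k).det * u, ?_,
      c * v + 2 * g - d * u - e, ?_⟩
    · rw [rec_k, hu, hv]; ring
    · push_cast at hg ⊢
      linear_combination v * hc - u * hd + 2 * hg - he

lemma ne_zero_of_pos {r s : ℤ} {a : ℕ → ℤ} (ha0 : a 0 = 0) (ha1 : a 1 = 1)
    (harec : ∀ n, a (n + 2) = r * a (n + 1) + s * a n)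
    {α β : ℂ} (hβ0 : β ≠ 0)
    (hα : α ^ 2 - (r : ℂ) * α - (s : ℂ) = 0) (hβ : β ^ 2 - (r : ℂ) * β - (s : ℂ) = 0)
    (hru : ¬ ∃ n : ℕ, 0 < n ∧ (α / β) ^ n = 1) {n : ℕ} (hn : 0 < n) : a n ≠ 0 := by
  have binet (n : ℕ) : (α - β) * a n = α ^ n - β ^ n := by
    induction n using Nat.twoStepInduction with
    | zero => simp [ha0]
    | one => simp [ha1]
    | more n h0 h1 =>
      rw [harec]
      push_cast
      linear_combination (r : ℂ) * h1 + (s : ℂ) * h0 - α ^ n * hα + β ^ n * hβ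
  intro h
  refine hru ⟨n, hn, ?_⟩
  have := binet n
  rw [h, Int.cast_zero, mul_zero] at this
  rw [div_pow, div_eq_one_iff_eq (pow_ne_zero _ hβ0)]
  exact (sub_eq_zero.mp this.symm)

lemma tendsto_of_dvd {p : ℕ} [Fact p.Prime] {u : ℕ → ℤ} {y : ℤ_[p]}
    (h : ∀ t, (p : ℤ_[p]) ^ t ∣ (u t : ℤ_[p]) - y) :
    Tendsto (fun t => (u t : ℚ_[p])) atTop (𝓝 (y : ℚ_[p])) := by
  rw [tendsto_iff_norm_sub_tendsto_zero]
  refine squeeze_zero (fun _ => norm_nonneg _) (g := fun t => ((p : ℝ)⁻¹) ^ t) (fun t => ?_) ?_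
  · have h1 := (PadicInt.norm_le_pow_iff_mem_span_pow _ t).2 (Ideal.mem_span_singleton.2 (h t))
    simpa [PadicInt.norm_def, zpow_neg] using h1
  · exact tendsto_pow_atTop_nhds_zero_of_lt_one (by positivity)
      (inv_lt_one_of_one_lt₀ (by exact_mod_cast (Fact.out : p.Prime).one_lt))

lemma exists_eq_div_pow {p : ℕ} [Fact p.Prime] (x : ℚ_[p]) :
    ∃ (y : ℤ_[p]) (j : ℕ), x = y / (p : ℚ_[p]) ^ j := by
  have hp : (1 : ℝ) < p := by exact_mod_cast (Fact.out : p.Prime).one_lt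
  have hp0 : (p : ℚ_[p]) ≠ 0 := by exact_mod_cast (Fact.out : p.Prime).ne_zero
  obtain ⟨j, hj⟩ := pow_unbounded_of_one_lt ‖x‖ hp
  refine ⟨⟨x * (p : ℚ_[p]) ^ j, ?_⟩, j, ?_⟩
  · rw [norm_mul, norm_pow, Padic.norm_p, inv_pow, ← div_eq_mul_inv]
    exact div_le_one_of_le₀ hj.le (by positivity)
  · field_simp

end LucasQuotient


/-- Let `(a_n)` be the Lucas sequence of the first kind for parameters `r, s`,
whose characteristic polynomial `x² - r·x - s` has two nonzero complex roots
`α, β` with `α/β` not a root of unity.  If `p` is a prime with `p ∤ s`, then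
`R({a_n : n ≥ 1})` is dense in `ℚ_[p]`. -/
theorem lucas_first_kind_quotient_dense
    (r s : ℤ) (a : ℕ → ℤ)
    (ha0 : a 0 = 0) (ha1 : a 1 = 1)
    (harec : ∀ n, a (n + 2) = r * a (n + 1) + s * a n)
    (α β : ℂ) (hα0 : α ≠ 0) (hβ0 : β ≠ 0)
    (hαroot : α ^ 2 - (r : ℂ) * α - (s : ℂ) = 0)
    (hβroot : β ^ 2 - (r : ℂ) * β - (s : ℂ) = 0)
    (hαβ : α ≠ β)
    (hru : ¬ ∃ n : ℕ, 0 < n ∧ (α / β) ^ n = 1)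
    (p : ℕ) [Fact p.Prime] (hs : ¬ (p : ℤ) ∣ s) :
    Dense ((fun q : ℚ => (q : ℚ_[p])) ''
      {q : ℚ | ∃ m n : ℕ, 1 ≤ m ∧ 1 ≤ n ∧ q = ((a m : ℚ)) / ((a n : ℚ))}) := by
  intro x
  obtain ⟨y, j, rfl⟩ := LucasQuotient.exists_eq_div_pow x
  have hp : p.Prime := Fact.out
  have hne {n : ℕ} (hn : 0 < n) : a n ≠ 0 :=
    LucasQuotient.ne_zero_of_pos ha0 ha1 harec hβ0 hαroot hβroot hru hn
  have key (t : ℕ) : ∃ k, 0 < k ∧ ∀ n : ℕ, ∃ u : ℤ,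
      a (k * n) = a k * u ∧ ((p ^ t : ℕ) : ℤ) ∣ u - n := by
    refine LucasQuotient.exists_mul_eq ha0 ha1 harec (pow_ne_zero _ hp.ne_zero) ?_
    rw [Nat.cast_pow]
    exact ((Nat.prime_iff_prime_int.mp hp).coprime_iff_not_dvd.2 hs).symm.pow_right
  choose k hk b hb hbd using key
  have hcast (t n : ℕ) : (p : ℤ_[p]) ^ t ∣ (b t n : ℤ_[p]) - n := by
    have := map_dvd (Int.castRingHom ℤ_[p]) (hbd t n)
    simpa using this
  -- The summand `p ^ t` keeps the index positive without changing its class modulo `p ^ t`.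
  let n (t : ℕ) : ℕ := y.appr t + p ^ t
  have hn (t : ℕ) : 0 < n t := Nat.add_pos_right _ (pow_pos hp.pos t)
  have hu : Filter.Tendsto (fun t => (b t (n t) : ℚ_[p])) Filter.atTop (nhds (y : ℚ_[p])) := by
    refine LucasQuotient.tendsto_of_dvd fun t => ?_
    have h1 : (p : ℤ_[p]) ^ t ∣ y - y.appr t :=
      Ideal.mem_span_singleton.1 (PadicInt.appr_spec t y)
    have h2 := dvd_add (dvd_sub (hcast t (n t)) h1) (dvd_refl _)
    convert h2 using 1
    simp only [n]
    push_cast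
    ring
  have hv : Filter.Tendsto (fun t => (b t (p ^ j) : ℚ_[p])) Filter.atTop
      (nhds ((p : ℚ_[p]) ^ j)) := by
    have := LucasQuotient.tendsto_of_dvd (y := (p : ℤ_[p]) ^ j) (u := fun t => b t (p ^ j))
      fun t => by simpa using hcast t (p ^ j)
    simpa using this
  have hp0 : (p : ℚ_[p]) ^ j ≠ 0 := pow_ne_zero _ (by exact_mod_cast hp.ne_zero)
  refine mem_closure_of_tendsto (hu.div hv hp0) (Filter.Eventually.of_forall fun t => ?_)
  refine ⟨_, ⟨k t * n t, k t * p ^ j, Nat.mul_pos (hk t) (hn t),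
    Nat.mul_pos (hk t) (pow_pos hp.pos j), rfl⟩, ?_⟩
  have hak : (a (k t) : ℚ_[p]) ≠ 0 := by exact_mod_cast hne (hk t)
  simp only [hb]
  push_cast
  exact mul_div_mul_left _ _ hak
end

section
/- Let (F_n) be the Fibonacci sequence (F_0 = 0, F_1 = 1, F_{n+2} = F_{n+1} + F_n) and let F = {F_n : n ≥ 1}. Then for every prime p, the quotient set R(F) = {F_m/F_n : m, n ≥ 1} is dense in ℚ_p. -/
/-!
Fix `j` and let `n ≥ 1` be a period of the Fibonacci sequence modulo `p ^ j`, so that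
`F_n ≡ 0` and `F_{n+1} ≡ 1` there. The addition formula then gives `F_{kn} = F_n * c_k` with
`c_k ≡ k` modulo `p ^ j`, for every `k`. Hence `F_{kn} / F_{ln} = c_k / c_l`, and as `j → ∞` this
tends to `k / l` in `ℚ_[p]`. So the closure of the quotient set contains all positive rationals.
These are dense: an integer `a` is the `p`-adic limit of the positive integers
`a + (|a| + 1) p ^ j`, so every rational is a limit of positive ones, and `ℚ` is dense in `ℚ_[p]`.
-/

/-- The Fibonacci sequence modulo `m` is purely periodic: the step `(a, b) ↦ (b, a + b)` is a
permutation of a finite set, hence of finite order. -/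
lemma exists_fib_period (m : ℕ) [NeZero m] :
    ∃ n, 1 ≤ n ∧ (Nat.fib n : ZMod m) = 0 ∧ (Nat.fib (n + 1) : ZMod m) = 1 := by
  let e : Equiv.Perm (ZMod m × ZMod m) :=
    { toFun := fun x => (x.2, x.1 + x.2)
      invFun := fun x => (x.2 - x.1, x.1)
      left_inv := fun x => by ext <;> simp
      right_inv := fun x => by ext <;> simp }
  have h : ∀ n : ℕ, (e ^ n) (0, 1) = ((Nat.fib n : ZMod m), (Nat.fib (n + 1) : ZMod m)) := by
    intro n
    induction n with
    | zero => simp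
    | succ n ih =>
      rw [pow_succ', Equiv.Perm.mul_apply, ih, Nat.fib_add_two]
      simp [e]
  refine ⟨orderOf e, orderOf_pos e, ?_⟩
  have h1 := h (orderOf e)
  rw [pow_orderOf_eq_one, Equiv.Perm.one_apply, Prod.mk.injEq] at h1
  exact ⟨h1.1.symm, h1.2.symm⟩

/-- If `F_n ≡ 0` and `F_{n+1} ≡ 1` modulo `m`, then `F_{kn} / F_n` is an integer congruent to `k`. -/
lemma fib_mul_of_period {m n : ℕ} (hn : 1 ≤ n) (h0 : (Nat.fib n : ZMod m) = 0)
    (h1 : (Nat.fib (n + 1) : ZMod m) = 1) (k : ℕ) :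
    ∃ c : ℕ, Nat.fib (k * n) = Nat.fib n * c ∧ (c : ZMod m) = k := by
  suffices H : (∃ c : ℕ, Nat.fib (k * n) = Nat.fib n * c ∧ (c : ZMod m) = k) ∧
      (Nat.fib (k * n + 1) : ZMod m) = 1 from H.1
  obtain ⟨r, rfl⟩ : ∃ r, n = r + 1 := ⟨n - 1, by omega⟩
  have hr : (Nat.fib r : ZMod m) = 1 := by
    rw [Nat.fib_add_two, Nat.cast_add, h0, add_zero] at h1
    exact h1
  induction k with
  | zero => exact ⟨⟨0, by simp⟩, by simp⟩
  | succ k ih =>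
    obtain ⟨⟨c, hc, hck⟩, hk⟩ := ih
    refine ⟨⟨c * Nat.fib r + Nat.fib (k * (r + 1) + 1), ?_, ?_⟩, ?_⟩
    · rw [Nat.succ_mul, ← add_assoc, Nat.fib_add, hc]
      ring
    · push_cast
      rw [hck, hr, hk, mul_one]
    · rw [Nat.succ_mul, Nat.fib_add]
      push_cast
      rw [h0, hk, h1]
      simp

open Filter Topology in
/-- Congruence modulo `p ^ j` at the `j`-th term forces `p`-adic convergence. -/
lemma tendsto_of_zmod_eq (p : ℕ) [Fact p.Prime] {c : ℕ → ℕ} {k : ℕ}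
    (h : ∀ j, (c j : ZMod (p ^ j)) = k) :
    Tendsto (fun j => (c j : ℚ_[p])) atTop (𝓝 (k : ℚ_[p])) := by
  have hp : 1 < (p : ℝ) := by exact_mod_cast (Fact.out : p.Prime).one_lt
  rw [tendsto_iff_norm_sub_tendsto_zero]
  refine squeeze_zero (g := fun j => ((p : ℝ)⁻¹) ^ j) (fun _ => norm_nonneg _) (fun j => ?_)
    (tendsto_pow_atTop_nhds_zero_of_lt_one (by positivity) (inv_lt_one_of_one_lt₀ hp))
  have hd : ((p ^ j : ℕ) : ℤ) ∣ (c j : ℤ) - k := by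
    rw [← ZMod.intCast_zmod_eq_zero_iff_dvd]
    push_cast
    rw [h j, sub_self]
  have := (Padic.norm_int_le_pow_iff_dvd (p := p) ((c j : ℤ) - k) j).2 (by exact_mod_cast hd)
  push_cast at this
  simpa [zpow_neg, inv_pow] using this

/-- The quotient set of the Fibonacci numbers `{F_n : n ≥ 1}` is dense in
every `ℚ_[p]`. -/
theorem fibonacci_quotient_dense (p : ℕ) [Fact p.Prime] :
    Dense ((fun q : ℚ => (q : ℚ_[p])) ''
      {q : ℚ | ∃ m n : ℕ, 1 ≤ m ∧ 1 ≤ n ∧ q = (Nat.fib m : ℚ) / (Nat.fib n : ℚ)}) := by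
  set S := ((fun q : ℚ => (q : ℚ_[p])) ''
      {q : ℚ | ∃ m n : ℕ, 1 ≤ m ∧ 1 ≤ n ∧ q = (Nat.fib m : ℚ) / (Nat.fib n : ℚ)}) with hS
  have hp0 : p ≠ 0 := (Fact.out : p.Prime).ne_zero
  have hpos : ∀ k l : ℕ, 1 ≤ k → 1 ≤ l → (k : ℚ_[p]) / l ∈ closure S := by
    intro k l hk hl
    have hper : ∀ j : ℕ, ∃ n, 1 ≤ n ∧ (Nat.fib n : ZMod (p ^ j)) = 0 ∧
        (Nat.fib (n + 1) : ZMod (p ^ j)) = 1 := fun j =>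
      haveI : NeZero (p ^ j) := ⟨pow_ne_zero _ hp0⟩
      exists_fib_period (p ^ j)
    choose n hn h0 h1 using hper
    choose c hc hck using fun j => fib_mul_of_period (hn j) (h0 j) (h1 j) k
    choose d hd hdl using fun j => fib_mul_of_period (hn j) (h0 j) (h1 j) l
    refine mem_closure_of_tendsto ((tendsto_of_zmod_eq p hck).div (tendsto_of_zmod_eq p hdl)
      (Nat.cast_ne_zero.2 (by omega))) (Filter.Eventually.of_forall fun j => ?_)
    refine ⟨_, ⟨k * n j, l * n j, Nat.mul_pos hk (hn j), Nat.mul_pos hl (hn j), rfl⟩, ?_⟩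
    have hf : (Nat.fib (n j) : ℚ_[p]) ≠ 0 :=
      Nat.cast_ne_zero.2 (Nat.fib_pos.2 (hn j)).ne'
    rw [hc, hd]
    push_cast
    exact mul_div_mul_left _ _ hf
  have hrat : ∀ q : ℚ, (q : ℚ_[p]) ∈ closure S := by
    intro q
    have hlim : Filter.Tendsto
        (fun j : ℕ => ((q.num : ℚ_[p]) + ((q.num.natAbs : ℚ_[p]) + 1) * (p : ℚ_[p]) ^ j) / q.den)
        Filter.atTop (nhds (((q.num : ℚ_[p]) + ((q.num.natAbs : ℚ_[p]) + 1) * 0) / q.den)) :=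
      ((tendsto_pow_atTop_nhds_zero_of_norm_lt_one Padic.norm_p_lt_one).const_mul _
        |>.const_add _).div_const _
    rw [mul_zero, add_zero, ← Rat.cast_def] at hlim
    refine isClosed_closure.mem_of_tendsto hlim (Filter.Eventually.of_forall fun j => ?_)
    have hpj : (1 : ℤ) ≤ (p : ℤ) ^ j := by exact_mod_cast Nat.pos_of_ne_zero (pow_ne_zero j hp0)
    have hge : 1 ≤ q.num + ((q.num.natAbs : ℤ) + 1) * (p : ℤ) ^ j := by
      have : (q.num.natAbs : ℤ) + 1 ≤ ((q.num.natAbs : ℤ) + 1) * (p : ℤ) ^ j :=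
        le_mul_of_one_le_right (by positivity) hpj
      omega
    obtain ⟨k, hk⟩ := Int.eq_ofNat_of_zero_le (zero_le_one.trans hge)
    have hkp : (k : ℚ_[p]) =
        (q.num : ℚ_[p]) + ((q.num.natAbs : ℚ_[p]) + 1) * (p : ℚ_[p]) ^ j := by
      have := congrArg (Int.cast : ℤ → ℚ_[p]) hk
      push_cast [-Int.natCast_natAbs] at this
      simpa using this.symm
    rw [← hkp]
    exact hpos k q.den (by omega) q.den_pos
  have hdense : DenseRange (fun q : ℚ => (q : ℚ_[p])) := Padic.denseRange_ratCast p
  rw [← dense_closure]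
  exact hdense.mono (Set.range_subset_iff.2 hrat)
end

section
/- Let (L_n) be the Lucas sequence (L_0 = 2, L_1 = 1, L_{n+2} = L_{n+1} + L_n) and let L = {L_n : n ≥ 1}. Then for every prime p, the quotient set R(L) = {L_m/L_n : m, n ≥ 1} is dense in ℚ_p if and only if p ≠ 2 and p divides L_n for some n ≥ 1. -/
/-!
If the `p`-adic valuations of the `L n` are bounded, then the quotients `L m / L n` stay away from
`0`, so they are not dense.  This covers a prime dividing no `L n`, and also `p = 2`, since
`8 ∤ L n` for all `n`.

Conversely let `p` be odd with `p ∣ L n` for some `n ≥ 1`.  The key congruence is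
`L ((2j+1) N) / L N ≡ (2j+1) (-(-1)^N)^j` modulo `L N` (`lucas_odd_multiple`).  With `2j+1 = p` it
shows that `p ^ v ∣ L N`, `v ≥ 1`, implies `p ^ (v+1) ∣ L (pN)`, so arbitrarily high powers of `p`
divide Lucas numbers.  With `j = 2i` the sign disappears, and the quotient is close to `4i+1` once
`L N` is highly divisible by `p`; as `4` is a `p`-adic unit, the numbers `4i+1` are dense in `ℤ_p`.
Hence `ℤ_p` lies in the closure of the quotient set, and since that set is stable under inversion,
so does the rest of `ℚ_p`.
-/

lemma lucas_pos {L : ℕ → ℕ} (hL0 : L 0 = 2) (hL1 : L 1 = 1)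
    (hLrec : ∀ n, L (n + 2) = L (n + 1) + L n)
    (n : ℕ) : 0 < L n := by
  induction n using Nat.twoStepInduction with
  | zero => omega
  | one => omega
  | more n h1 h2 => rw [hLrec]; omega

/-- The product formula `L_{a+2N} + (-1)^N L_a = L_N L_{a+N}`. -/
lemma lucas_add_two_mul {L : ℕ → ℕ} (hL0 : L 0 = 2) (hL1 : L 1 = 1)
    (hLrec : ∀ n, L (n + 2) = L (n + 1) + L n)
    (N : ℕ) :
    ∀ a, (L (a + 2 * N) : ℤ) + (-1) ^ N * L a = L N * L (a + N) := by
  induction N using Nat.twoStepInduction with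
  | zero => intro a; simp [hL0]; ring
  | one => intro a; simp [hL1, hLrec]
  | more N h1 h2 =>
    intro a
    have e1 := h1 (a + 2)
    have e2 := h2 (a + 1)
    have r1 : (L (a + 2) : ℤ) = L (a + 1) + L a := by exact_mod_cast hLrec a
    have r2 : (L (N + 2) : ℤ) = L (N + 1) + L N := by exact_mod_cast hLrec N
    have r3 : (L (a + 2 * N + 4) : ℤ) = L (a + 2 * N + 3) + L (a + 2 * N + 2) := by
      exact_mod_cast hLrec (a + 2 * N + 2)
    rw [show a + 2 + 2 * N = a + 2 * N + 2 by ring, show a + 2 + N = a + N + 2 by ring] at e1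
    rw [show a + 1 + 2 * (N + 1) = a + 2 * N + 3 by ring,
      show a + 1 + (N + 1) = a + N + 2 by ring, pow_succ] at e2
    rw [show a + 2 * (N + 2) = a + 2 * N + 4 by ring, show a + (N + 2) = a + N + 2 by ring,
      pow_add, r2, r3]
    linear_combination e1 + e2 - (-1) ^ N * r1

/-- `L ((2j+1) N) / L N` is an integer congruent to `(2j+1) (-(-1)^N)^j` modulo `L N`. -/
lemma lucas_odd_multiple {L : ℕ → ℕ} (hL0 : L 0 = 2) (hL1 : L 1 = 1)
    (hLrec : ∀ n, L (n + 2) = L (n + 1) + L n)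
    (N j : ℕ) :
    ∃ Q : ℤ, (L ((2 * j + 1) * N) : ℤ) =
      L N * (Q * L N + (2 * j + 1) * (-(-1) ^ N) ^ j) := by
  have P := lucas_add_two_mul hL0 hL1 hLrec
  have hE : ((-1 : ℤ) ^ N) ^ 2 = 1 := by rw [← pow_mul, mul_comm, pow_mul]; simp
  have h2 := P N 0
  simp only [zero_add, hL0, Nat.cast_ofNat] at h2
  induction j using Nat.twoStepInduction with
  | zero => exact ⟨0, by simp⟩
  | one =>
    refine ⟨L N, ?_⟩
    have h3 := P N N
    rw [show N + 2 * N = (2 * 1 + 1) * N by ring, ← two_mul] at h3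
    push_cast
    linear_combination h3 + L N * h2
  | more j h1 h3 =>
    obtain ⟨Q1, h1⟩ := h1
    obtain ⟨Q2, h3⟩ := h3
    have h := P (2 * N) ((2 * j + 1) * N)
    rw [show (2 * j + 1) * N + 2 * (2 * N) = (2 * (j + 2) + 1) * N by ring,
      show (2 * j + 1) * N + 2 * N = (2 * (j + 1) + 1) * N by ring, h1, h3, pow_mul] at h
    generalize (-1 : ℤ) ^ N = e at *
    refine ⟨L N * (Q2 * L N + (2 * (j + 1) + 1) * (-e) ^ (j + 1)) - 2 * e * Q2 - Q1, ?_⟩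
    have h2' : (L (2 * N) : ℤ) = L N * L N - 2 * e := by linear_combination h2
    rw [h2'] at h
    push_cast at h ⊢
    rw [pow_succ, pow_succ] at *
    linear_combination h +
      (L N * (-e) ^ j * (2 * (j + 1) + 1) * 2 - L N * (-e) ^ j * (2 * (j + 2) + 1)) * hE

/-- Once an odd `p` divides some Lucas number, all powers of `p` do. -/
lemma exists_pow_dvd_lucas {L : ℕ → ℕ} (hL0 : L 0 = 2) (hL1 : L 1 = 1)
    (hLrec : ∀ n, L (n + 2) = L (n + 1) + L n)
    {p : ℕ} (hp : Odd p) {z : ℕ} (hz : 1 ≤ z) (hpz : p ∣ L z) (v : ℕ) :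
    ∃ N, 1 ≤ N ∧ p ^ (v + 1) ∣ L N := by
  induction v with
  | zero => exact ⟨z, hz, by simpa using hpz⟩
  | succ v ih =>
    obtain ⟨N, hN, hd⟩ := ih
    obtain ⟨j, rfl⟩ := hp
    obtain ⟨Q, hQ⟩ := lucas_odd_multiple hL0 hL1 hLrec N j
    refine ⟨(2 * j + 1) * N, Nat.mul_pos (by omega) hN, ?_⟩
    zify at hd ⊢
    rw [hQ, pow_succ]
    exact mul_dvd_mul hd (dvd_add
      (((dvd_pow_self _ (by omega)).trans hd).mul_left _) (dvd_mul_right _ _))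

lemma not_eight_dvd_lucas {L : ℕ → ℕ} (hL0 : L 0 = 2) (hL1 : L 1 = 1)
    (hLrec : ∀ n, L (n + 2) = L (n + 1) + L n)
    (n : ℕ) : ¬ 8 ∣ L n := by
  -- The sequence modulo 8 has period 12.
  have key : ∀ k, L (12 * k) % 8 = 2 ∧ L (12 * k + 1) % 8 = 1 := by
    intro k
    induction k with
    | zero => simp [hL0, hL1]
    | succ k ih =>
      have h := fun i => hLrec (12 * k + i)
      have := h 0; have := h 1; have := h 2; have := h 3; have := h 4; have := h 5
      have := h 6; have := h 7; have := h 8; have := h 9; have := h 10; have := h 11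
      simp only [Nat.add_assoc, Nat.reduceAdd, Nat.mul_add, Nat.reduceMul, add_zero] at *
      omega
  obtain ⟨h0, h1⟩ := key (n / 12)
  have hn : n = 12 * (n / 12) + n % 12 := by omega
  have hlt : n % 12 < 12 := Nat.mod_lt _ (by norm_num)
  generalize n / 12 = k at *
  generalize n % 12 = r at *
  subst hn
  have h := fun i => hLrec (12 * k + i)
  have := h 0; have := h 1; have := h 2; have := h 3; have := h 4; have := h 5
  have := h 6; have := h 7; have := h 8; have := h 9; have := h 10
  simp only [Nat.add_assoc, Nat.reduceAdd, add_zero] at *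
  interval_cases r <;> (try rw [add_zero]) <;> omega

/-- If the `p`-adic valuation of the terms is bounded, the quotients stay away from `0`. -/
lemma not_dense_of_not_pow_dvd (L : ℕ → ℕ) (p : ℕ) [Fact p.Prime] (k : ℕ)
    (hk : ∀ n, 1 ≤ n → ¬ p ^ k ∣ L n) :
    ¬ Dense ((fun q : ℚ => (q : ℚ_[p])) ''
      {q : ℚ | ∃ m n : ℕ, 1 ≤ m ∧ 1 ≤ n ∧ q = (L m : ℚ) / (L n : ℚ)}) := by
  intro hd
  have hp : (0 : ℝ) < p := by exact_mod_cast (Fact.out : p.Prime).pos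
  obtain ⟨_, hq, ⟨q, ⟨m, n, hm, hn, rfl⟩, rfl⟩⟩ :=
    Metric.dense_iff.1 hd 0 ((p : ℝ) ^ (-k : ℤ)) (by positivity)
  rw [Metric.mem_ball, dist_zero_right] at hq
  push_cast at hq
  rw [norm_div] at hq
  have h1 : ‖(L n : ℚ_[p])‖ ≤ 1 := by exact_mod_cast Padic.norm_int_le_one (p := p) (L n)
  have hn0 : 0 < ‖(L n : ℚ_[p])‖ := by
    rw [norm_pos_iff, Nat.cast_ne_zero]
    intro h; exact hk n hn (by simp [h])
  have h2 : ‖((L m : ℤ) : ℚ_[p])‖ ≤ (p : ℝ) ^ (-k : ℤ) := by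
    push_cast
    rw [div_lt_iff₀ hn0] at hq
    exact hq.le.trans (mul_le_of_le_one_right (by positivity) h1)
  rw [Padic.norm_int_le_pow_iff_dvd] at h2
  exact hk m hm (by exact_mod_cast h2)

/-- Let `(L_n)` be the Lucas numbers (`L_0 = 2`, `L_1 = 1`,
`L_{n+2} = L_{n+1} + L_n`).  For every prime `p`, the quotient set
`R({L_n : n ≥ 1})` is dense in `ℚ_[p]` iff `p ≠ 2` and `p ∣ L_n` for some
`n ≥ 1`. -/
theorem lucas_numbers_quotient_dense_iff
    (L : ℕ → ℕ) (hL0 : L 0 = 2) (hL1 : L 1 = 1)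
    (hLrec : ∀ n, L (n + 2) = L (n + 1) + L n)
    (p : ℕ) [Fact p.Prime] :
    Dense ((fun q : ℚ => (q : ℚ_[p])) ''
      {q : ℚ | ∃ m n : ℕ, 1 ≤ m ∧ 1 ≤ n ∧ q = (L m : ℚ) / (L n : ℚ)}) ↔
    (p ≠ 2 ∧ ∃ n : ℕ, 1 ≤ n ∧ p ∣ L n) := by
  have hp : p.Prime := Fact.out
  constructor
  · intro hd
    constructor
    · rintro rfl
      exact not_dense_of_not_pow_dvd L 2 3
        (fun n _ => not_eight_dvd_lucas hL0 hL1 hLrec n) hd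
    · by_contra! h
      exact not_dense_of_not_pow_dvd L p 1 (by simpa using h) hd
  rintro ⟨hp2, z, hz, hpz⟩
  have hodd := hp.odd_of_ne_two hp2
  set S := (fun q : ℚ => (q : ℚ_[p])) ''
      {q : ℚ | ∃ m n : ℕ, 1 ≤ m ∧ 1 ≤ n ∧ q = (L m : ℚ) / (L n : ℚ)} with hS
  have h4 : ‖(4 : ℚ_[p])‖ = 1 := by
    have : ‖((4 : ℕ) : ℚ_[p])‖ = 1 := by
      rw [Padic.norm_natCast_eq_one_iff]
      exact (Nat.Coprime.pow_right 2 (Nat.coprime_two_right.2 hodd) : p.Coprime (2 ^ 2))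
    simpa using this
  have h40 : (4 : ℚ_[p]) ≠ 0 := by rw [← norm_pos_iff, h4]; norm_num
  have hint : ∀ x : ℚ_[p], ‖x‖ ≤ 1 → x ∈ closure S := by
    intro x hx
    rw [Metric.mem_closure_iff]
    intro ε hε
    obtain ⟨v, hv⟩ := PadicInt.exists_pow_neg_lt p hε
    obtain ⟨N, hN, hdvd⟩ := exists_pow_dvd_lucas hL0 hL1 hLrec hodd hz hpz v
    have hy : ‖(x - 1) / 4‖ ≤ 1 := by
      rw [norm_div, h4, div_one]
      rw [sub_eq_add_neg]
      exact (Padic.nonarchimedean x (-1)).trans (max_le hx (by simp))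
    obtain ⟨y, hyx⟩ : ∃ y : ℤ_[p], (y : ℚ_[p]) = (x - 1) / 4 := ⟨⟨_, hy⟩, rfl⟩
    obtain ⟨i, hi⟩ := Metric.denseRange_iff.1 (PadicInt.denseRange_natCast (p := p)) y ε hε
    rw [dist_eq_norm, PadicInt.norm_def, PadicInt.coe_sub, PadicInt.coe_natCast, hyx] at hi
    obtain ⟨Q, hQ⟩ := lucas_odd_multiple hL0 hL1 hLrec N (2 * i)
    -- The exponent `2 * i` is even, so the sign in the congruence is trivial.
    have hsign : (-(-1 : ℤ) ^ N) ^ (2 * i) = 1 := by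
      rw [pow_mul, neg_sq, pow_right_comm (-1 : ℤ) N 2, neg_one_sq, one_pow, one_pow]
    rw [hsign, mul_one] at hQ
    have hN0 : (L N : ℚ_[p]) ≠ 0 := by
      exact_mod_cast (lucas_pos hL0 hL1 hLrec N).ne'
    have hQ' : (L ((2 * (2 * i) + 1) * N) : ℚ_[p]) =
        L N * (Q * L N + (2 * (2 * i) + 1)) := by exact_mod_cast congrArg (Int.cast (R := ℚ_[p])) hQ
    refine ⟨_, ⟨_, ⟨(2 * (2 * i) + 1) * N, N, Nat.mul_pos (by omega) hN, hN, rfl⟩, rfl⟩, ?_⟩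
    push_cast
    rw [hQ', mul_div_cancel_left₀ _ hN0, dist_eq_norm,
      show x - (Q * L N + (2 * (2 * i) + 1)) = 4 * ((x - 1) / 4 - i) + -((Q * L N : ℤ) : ℚ_[p]) by
        push_cast; field_simp; ring]
    refine (Padic.nonarchimedean _ _).trans_lt (max_lt ?_ ?_)
    · rw [norm_mul, h4, one_mul]
      exact hi
    · rw [norm_neg]
      refine lt_of_le_of_lt ?_ hv
      rw [Padic.norm_int_le_pow_iff_dvd]
      refine Dvd.dvd.mul_left ?_ _
      exact_mod_cast (pow_dvd_pow p (Nat.le_succ v)).trans hdvd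
  intro x
  rcases le_total ‖x‖ 1 with hx | hx
  · exact hint x hx
  · have hx0 : x ≠ 0 := by rw [← norm_pos_iff]; linarith
    have hinv : x⁻¹ ∈ closure S := hint _ (by rw [norm_inv]; exact inv_le_one_of_one_le₀ hx)
    have hmaps : Set.MapsTo (fun y : ℚ_[p] => y⁻¹) S S := by
      rintro _ ⟨_, ⟨m, n, hm, hn, rfl⟩, rfl⟩
      exact ⟨_, ⟨n, m, hn, hm, rfl⟩, by push_cast; rw [inv_div]⟩
    simpa using (continuousAt_inv₀ (inv_ne_zero hx0)).continuousWithinAt.mem_closure hinv hmaps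
end

section
/- There exist infinitely many ordered pairs of primes (p, q) such that p is not a primitive root modulo q and q is a primitive root modulo p². -/
/-!
Already `p = 2` gives infinitely many pairs. Take a prime `q ≡ 7 (mod 8)`; Dirichlet's theorem
provides infinitely many. Then `2` is a square modulo `q`, so its order divides `(q - 1) / 2` and
it is not a primitive root modulo `q`. On the other hand `q ≡ 3 (mod 4)`, and `3` generates
`(ℤ/4ℤ)ˣ`.
-/

/-- There exist infinitely many ordered pairs of primes `(p, q)` such that `p`
is not a primitive root modulo `q` while `q` is a primitive root modulo `p²`
(primitive root modulo `m` meaning the multiplicative order modulo `m` equals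
`φ(m)`). -/
theorem infinitely_many_prime_pairs_primitive_root_asymmetry :
    {pq : ℕ × ℕ | pq.1.Prime ∧ pq.2.Prime ∧
      ¬ (IsCoprime (pq.1 : ℤ) (pq.2 : ℤ) ∧
          orderOf ((pq.1 : ZMod pq.2)) = Nat.totient pq.2) ∧
      (IsCoprime (pq.2 : ℤ) (pq.1 : ℤ) ∧
          orderOf ((pq.2 : ZMod (pq.1 ^ 2))) = Nat.totient (pq.1 ^ 2))}.Infinite := by
  have hinf : {q : ℕ | q.Prime ∧ q ≡ 7 [MOD 8]}.Infinite :=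
    Nat.infinite_setOfPred_prime_and_modEq (by norm_num) (by norm_num)
  refine (hinf.image (f := fun q => (2, q)) fun a _ b _ h => (Prod.mk.inj h).2).mono ?_
  rintro _ ⟨q, ⟨hq, h7⟩, rfl⟩
  have h8 : q % 8 = 7 := h7
  refine ⟨Nat.prime_two, hq, ?_, ?_, ?_⟩
  · rintro ⟨-, hord⟩
    have : Fact q.Prime := ⟨hq⟩
    have hsq : IsSquare (2 : ZMod q) :=
      (ZMod.exists_sq_eq_two_iff (by omega)).2 (Or.inr h8)
    have h2 : (2 : ZMod q) ≠ 0 := by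
      intro h
      have := (ZMod.natCast_eq_zero_iff 2 q).1 (by exact_mod_cast h)
      have := Nat.le_of_dvd (by norm_num) this
      omega
    have hpow : (2 : ZMod q) ^ (q / 2) = 1 := (ZMod.euler_criterion q h2).1 hsq
    have hdvd : orderOf (2 : ZMod q) ∣ q / 2 := orderOf_dvd_of_pow_eq_one hpow
    have hle := Nat.le_of_dvd (by omega) hdvd
    rw [Nat.totient_prime hq] at hord
    simp only [Nat.cast_ofNat] at hord
    omega
  · rw [Nat.isCoprime_iff_coprime]
    have hodd : q % 2 = 1 := by omega
    exact Nat.coprime_two_right.2 (Nat.odd_iff.2 hodd)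
  · have h3 : (q : ZMod (2 ^ 2)) = 3 := by
      have : q ≡ 3 [MOD 2 ^ 2] := by
        change q % 4 = 3
        omega
      exact_mod_cast (ZMod.natCast_eq_natCast_iff q 3 (2 ^ 2)).2 this
    have htot : Nat.totient (2 ^ 2) = 2 := by decide
    change orderOf (q : ZMod (2 ^ 2)) = Nat.totient (2 ^ 2)
    rw [h3, htot]
    exact orderOf_eq_prime (by decide) (by decide)
end
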